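/- Let T = (G, P, L) be a canvas that is a harmonica from P to P' with government 𝒞. Then Φ_T(P', 𝒞) is a government. -/

import Mathlib

/-!
Common definitions: plane graphs (given by a concrete embedding in the plane),
outer face, canvases, list colorings, governments, harmonicas and coloring
harmonicas, following Postle–Thomas,
"Five-list-coloring graphs on surfaces III".
-/

open Set

universe u

/-- A finite simple graph together with an embedding in the plane:
each vertex gets a point, each edge a simple arc joining its endpoints;
arcs avoid other vertices, and two distinct edges meet only in common
endpoints. -/
structure PlaneGraph (V : Type u) where
  verts : Set V
  Adj : V → V → Prop
  finite_verts : verts.Finite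
  adj_symm : ∀ u v, Adj u v → Adj v u
  adj_irrefl : ∀ v, ¬Adj v v
  adj_mem : ∀ u v, Adj u v → u ∈ verts
  pos : V → ℝ × ℝ
  arc : Sym2 V → Set (ℝ × ℝ)
  pos_injOn : Set.InjOn pos verts
  arc_arc : ∀ u v, Adj u v → ∃ f : ℝ → ℝ × ℝ,
    ContinuousOn f (Set.Icc 0 1) ∧ Set.InjOn f (Set.Icc 0 1) ∧
    f '' Set.Icc 0 1 = arc s(u, v) ∧ f 0 = pos u ∧ f 1 = pos v
  arc_avoid : ∀ u v, Adj u v → ∀ w ∈ verts, pos w ∈ arc s(u, v) → w = u ∨ w = v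
  arc_meet : ∀ u v x y, Adj u v → Adj x y → s(u, v) ≠ s(x, y) →
    arc s(u, v) ∩ arc s(x, y) ⊆ pos '' (({u, v} : Set V) ∩ ({x, y} : Set V))

namespace PlaneGraph

variable {V : Type u}

/-- The point set of the drawing of the plane graph. -/
def image (G : PlaneGraph V) : Set (ℝ × ℝ) :=
  G.pos '' G.verts ∪ ⋃ (u : V) (v : V) (_ : G.Adj u v), G.arc s(u, v)

/-- The outer (unbounded) face of the drawing. -/
def outerFace (G : PlaneGraph V) : Set (ℝ × ℝ) :=
  {p | p ∉ G.image ∧ ¬Bornology.IsBounded (connectedComponentIn G.imageᶜ p)}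

/-- A vertex incident with (i.e. on the boundary of) the outer face. -/
def OnOuter (G : PlaneGraph V) (v : V) : Prop := G.pos v ∈ frontier G.outerFace

/-- An edge incident with (i.e. on the boundary of) the outer face. -/
def EdgeOnOuter (G : PlaneGraph V) (u v : V) : Prop :=
  G.arc s(u, v) ⊆ frontier G.outerFace

/-- The vertices of the boundary of the outer face. -/
def boundaryVerts (G : PlaneGraph V) : Set V := {v | v ∈ G.verts ∧ G.OnOuter v}

/-- Connectivity of a plane graph. -/
def Connected (G : PlaneGraph V) : Prop :=
  G.verts.Nonempty ∧ ∀ u ∈ G.verts, ∀ v ∈ G.verts, Relation.ReflTransGen G.Adj u v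

/-- `H` is a (plane) subgraph of `G`, drawn the same way. -/
def IsSubgraph (H G : PlaneGraph V) : Prop :=
  H.verts ⊆ G.verts ∧ (∀ u v, H.Adj u v → G.Adj u v) ∧
  (∀ v ∈ H.verts, H.pos v = G.pos v) ∧
  (∀ u v, H.Adj u v → H.arc s(u, v) = G.arc s(u, v))

/-- Delete a set of vertices (and all incident edges) from a plane graph. -/
def deleteVerts (G : PlaneGraph V) (s : Set V) : PlaneGraph V where
  verts := G.verts \ s
  Adj u v := G.Adj u v ∧ u ∉ s ∧ v ∉ s
  finite_verts := G.finite_verts.subset Set.diff_subset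
  adj_symm := fun u v h => ⟨G.adj_symm u v h.1, h.2.2, h.2.1⟩
  adj_irrefl := fun v h => G.adj_irrefl v h.1
  adj_mem := fun u v h => ⟨G.adj_mem u v h.1, h.2.1⟩
  pos := G.pos
  arc := G.arc
  pos_injOn := G.pos_injOn.mono Set.diff_subset
  arc_arc := fun u v h => G.arc_arc u v h.1
  arc_avoid := fun u v h w hw hm => G.arc_avoid u v h.1 w hw.1 hm
  arc_meet := fun u v x y h h' hne => G.arc_meet u v x y h.1 h'.1 hne

/-- `G` has a proper coloring from the lists `L`. -/
def HasLColoring (G : PlaneGraph V) (L : V → Finset ℕ) : Prop :=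
  ∃ φ : V → ℕ, (∀ v ∈ G.verts, φ v ∈ L v) ∧ ∀ u v, G.Adj u v → φ u ≠ φ v

/-- A vertex of degree exactly one. -/
def DegreeOne (G : PlaneGraph V) (x : V) : Prop :=
  (∃ a, G.Adj x a) ∧ ∀ a b, G.Adj x a → G.Adj x b → a = b

end PlaneGraph

/-- The cyclic successor of an index in a list. -/
def cycNext {V : Type u} (C : List V) (i : Fin C.length) : Fin C.length :=
  ⟨((i : ℕ) + 1) % C.length, Nat.mod_lt _ (lt_of_le_of_lt (Nat.zero_le _) i.isLt)⟩

/-- The list `C` is a cycle of `G` whose image is exactly the boundary of the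
outer face of `G`; i.e. `G` is a plane graph with outer cycle `C`. -/
def PlaneGraph.IsOuterCycle {V : Type u} (G : PlaneGraph V) (C : List V) : Prop :=
  C.Nodup ∧ 3 ≤ C.length ∧ (∀ v ∈ C, v ∈ G.verts) ∧
  (∀ i : Fin C.length, G.Adj (C.get i) (C.get (cycNext C i))) ∧
  frontier G.outerFace =
    G.pos '' {v | v ∈ C} ∪ ⋃ i : Fin C.length, G.arc s(C.get i, C.get (cycNext C i))

/-- `pq` is an edge of the cycle (given as a list) `C`. -/
def IsCycleEdge {V : Type u} (C : List V) (p q : V) : Prop :=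
  ∃ i : Fin C.length, s(p, q) = s(C.get i, C.get (cycNext C i))

/-- `(G, S, L)` is a canvas, where the subgraph `S` of the boundary of the
outer face of `G` is given by its vertex set `Sverts` and adjacency `SAdj`. -/
structure IsCanvas {V : Type u} (G : PlaneGraph V) (Sverts : Set V) (SAdj : V → V → Prop)
    (L : V → Finset ℕ) : Prop where
  sadj_symm : ∀ u v, SAdj u v → SAdj v u
  sadj_sub : ∀ u v, SAdj u v → G.Adj u v
  sadj_mem : ∀ u v, SAdj u v → u ∈ Sverts
  sverts_sub : Sverts ⊆ G.verts
  sverts_outer : ∀ v ∈ Sverts, G.OnOuter v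
  sedges_outer : ∀ u v, SAdj u v → G.EdgeOnOuter u v
  lists_nonempty : ∀ v ∈ G.verts, (L v).Nonempty
  card_inner : ∀ v ∈ G.verts, ¬G.OnOuter v → 5 ≤ (L v).card
  card_outside_S : ∀ v ∈ G.verts, v ∉ Sverts → 3 ≤ (L v).card
  scolorable : ∃ φ : V → ℕ, (∀ v ∈ Sverts, φ v ∈ L v) ∧ ∀ u v, SAdj u v → φ u ≠ φ v

/-- The adjacency relation of the single-edge path `p₁p₂`. -/
def pathAdj {V : Type u} (p1 p2 : V) : V → V → Prop :=
  fun u v => (u = p1 ∧ v = p2) ∨ (u = p2 ∧ v = p1)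

/-- `(G, P, L)` is a canvas whose precolored subgraph is a path `P = p₁p₂` of
length one (in the boundary of the outer face of `G`). -/
def IsPathCanvas {V : Type u} (G : PlaneGraph V) (p1 p2 : V) (L : V → Finset ℕ) : Prop :=
  p1 ≠ p2 ∧ IsCanvas G {p1, p2} (pathAdj p1 p2) L

/-- `c = (c₁, c₂)` is a proper `L`-coloring of the edge `p₁p₂`. -/
def ProperEdgeColoring {V : Type u} (L : V → Finset ℕ) (p1 p2 : V) (c : ℕ × ℕ) : Prop :=
  c.1 ∈ L p1 ∧ c.2 ∈ L p2 ∧ c.1 ≠ c.2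

/-- `Φ_T(P', 𝒞)`: the colorings of the edge `q₁q₂` extendable to an `L`-coloring
of `G` whose restriction to `p₁p₂` lies in `C`. -/
def Phi {V : Type u} (G : PlaneGraph V) (L : V → Finset ℕ) (p1 p2 q1 q2 : V)
    (C : Set (ℕ × ℕ)) : Set (ℕ × ℕ) :=
  {c | ∃ φ : V → ℕ, (∀ v ∈ G.verts, φ v ∈ L v) ∧ (∀ u v, G.Adj u v → φ u ≠ φ v) ∧
    (φ p1, φ p2) ∈ C ∧ φ q1 = c.1 ∧ φ q2 = c.2}

/-- The set of colors used on the first vertex of the path. -/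
def fstColors (C : Set (ℕ × ℕ)) : Set ℕ := Prod.fst '' C

/-- The set of colors used on the second vertex of the path. -/
def sndColors (C : Set (ℕ × ℕ)) : Set ℕ := Prod.snd '' C

/-- A dictatorship: at least two (distinct) colorings, all agreeing on one of
the two vertices (the dictator). -/
def IsDictatorship (C : Set (ℕ × ℕ)) : Prop :=
  (∃ c ∈ C, ∃ d ∈ C, c ≠ d) ∧
  ((∃ a, ∀ c ∈ C, c.1 = a) ∨ (∃ a, ∀ c ∈ C, c.2 = a))

/-- A democracy: exactly the two colorings `(x, y)` and `(y, x)`. -/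
def IsDemocracy (C : Set (ℕ × ℕ)) : Prop :=
  ∃ x y : ℕ, x ≠ y ∧ C = {(x, y), (y, x)}

/-- A government is a dictatorship or a democracy. -/
def IsGovernment (C : Set (ℕ × ℕ)) : Prop := IsDictatorship C ∨ IsDemocracy C

/-- A confederacy: not a government, but the union of two governments. -/
def IsConfederacy (C : Set (ℕ × ℕ)) : Prop :=
  ¬IsGovernment C ∧ ∃ C1 C2 : Set (ℕ × ℕ), IsGovernment C1 ∧ IsGovernment C2 ∧ C = C1 ∪ C2

/-- The canvas `(G, p₁p₂, L)` is a harmonica from the path `p₁p₂` to the path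
`q₁q₂` with government `C`. -/
inductive IsHarmonica {V : Type u} (L : V → Finset ℕ) :
    PlaneGraph V → V → V → V → V → Set (ℕ × ℕ) → Prop where
  /-- Rule (i): `G = P = P'`. -/
  | same (G : PlaneGraph V) (p1 p2 q1 q2 : V) (C : Set (ℕ × ℕ))
      (hcanvas : IsPathCanvas G p1 p2 L)
      (hproper : ∀ c ∈ C, ProperEdgeColoring L p1 p2 c)
      (hgov : IsGovernment C)
      (hq : (q1 = p1 ∧ q2 = p2) ∨ (q1 = p2 ∧ q2 = p1))
      (hverts : G.verts = {p1, p2})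
      (hedges : ∀ u v, G.Adj u v → pathAdj p1 p2 u v) :
      IsHarmonica L G p1 p2 q1 q2 C
  /-- Rule (ii): `C` is a dictatorship, `G = P ∪ P'`, `V(P) ∩ V(P') = {z}`
  where `z` is the dictator. -/
  | cherry (G : PlaneGraph V) (p1 p2 q1 q2 z : V) (C : Set (ℕ × ℕ))
      (hcanvas : IsPathCanvas G p1 p2 L)
      (hproper : ∀ c ∈ C, ProperEdgeColoring L p1 p2 c)
      (hdict : IsDictatorship C)
      (hq : q1 ≠ q2) (hqadj : G.Adj q1 q2) (hqout : G.EdgeOnOuter q1 q2)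
      (hverts : G.verts = {p1, p2, q1, q2})
      (hedges : ∀ u v, G.Adj u v → pathAdj p1 p2 u v ∨ pathAdj q1 q2 u v)
      (hz : (({p1, p2} : Set V) ∩ ({q1, q2} : Set V)) = {z})
      (hzdict : (z = p1 ∧ ∃ a, ∀ c ∈ C, c.1 = a) ∨ (z = p2 ∧ ∃ a, ∀ c ∈ C, c.2 = a)) :
      IsHarmonica L G p1 p2 q1 q2 C
  /-- Rule (iii): `C` is a dictatorship with dictator `z ∈ V(P)` in color `c`,
  sitting on a triangle `z u₁ u₂`. -/
  | dict (G : PlaneGraph V) (p1 p2 q1 q2 z w u1 u2 : V) (c : ℕ) (L0 : Finset ℕ)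
      (C C' : Set (ℕ × ℕ))
      (hcanvas : IsPathCanvas G p1 p2 L)
      (hproper : ∀ d ∈ C, ProperEdgeColoring L p1 p2 d)
      (hdict : IsDictatorship C)
      (hq : q1 ≠ q2) (hqadj : G.Adj q1 q2) (hqout : G.EdgeOnOuter q1 q2)
      (hz : (z = p1 ∧ w = p2 ∧ (∀ d ∈ C, d.1 = c) ∧
              (u1 = w → sndColors C = (L0 : Set ℕ)) ∧
              (u2 = w → sndColors C = (L0 : Set ℕ))) ∨
            (z = p2 ∧ w = p1 ∧ (∀ d ∈ C, d.2 = c) ∧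
              (u1 = w → fstColors C = (L0 : Set ℕ)) ∧
              (u2 = w → fstColors C = (L0 : Set ℕ))))
      (hzu1 : G.Adj z u1) (hzu2 : G.Adj z u2) (hu12 : G.Adj u1 u2)
      (hL0 : L0.card = 2)
      (hLu1 : u1 ∉ ({p1, p2} : Set V) → L u1 = L0 ∪ {c})
      (hLu2 : u2 ∉ ({p1, p2} : Set V) → L u2 = L0 ∪ {c})
      (hu1P : u1 ∈ ({p1, p2} : Set V) → u1 = w)
      (hu2P : u2 ∈ ({p1, p2} : Set V) → u2 = w)
      (hdem : IsDemocracy C')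
      (hC'1 : fstColors C' = (L0 : Set ℕ)) (hC'2 : sndColors C' = (L0 : Set ℕ))
      (hrec : IsHarmonica L (G.deleteVerts (({p1, p2} : Set V) \ {u1, u2})) u1 u2 q1 q2 C') :
      IsHarmonica L G p1 p2 q1 q2 C
  /-- Rule (iv), with `i = 1`: `C` is a democracy, `z` is a common neighbor of
  `p₁, p₂`, and `p₁` is deleted. -/
  | demo1 (G : PlaneGraph V) (p1 p2 q1 q2 z : V) (a b c : ℕ) (L0 : Finset ℕ)
      (C C' : Set (ℕ × ℕ))
      (hcanvas : IsPathCanvas G p1 p2 L)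
      (hproper : ∀ d ∈ C, ProperEdgeColoring L p1 p2 d)
      (hdemC : IsDemocracy C)
      (hq : q1 ≠ q2) (hqadj : G.Adj q1 q2) (hqout : G.EdgeOnOuter q1 q2)
      (hz1 : G.Adj z p1) (hz2 : G.Adj z p2)
      (hLz : L z = L0 ∪ {c})
      (hC1 : fstColors C = (L0 : Set ℕ)) (hC2 : sndColors C = (L0 : Set ℕ))
      (hab : a ≠ b) (hL0ab : (L0 : Set ℕ) = {a, b})
      (hC' : C' = {(c, a), (c, b)})
      (hrec : IsHarmonica L (G.deleteVerts {p1}) z p2 q1 q2 C') :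
      IsHarmonica L G p1 p2 q1 q2 C
  /-- Rule (iv), with `i = 2`: `C` is a democracy, `z` is a common neighbor of
  `p₁, p₂`, and `p₂` is deleted. -/
  | demo2 (G : PlaneGraph V) (p1 p2 q1 q2 z : V) (a b c : ℕ) (L0 : Finset ℕ)
      (C C' : Set (ℕ × ℕ))
      (hcanvas : IsPathCanvas G p1 p2 L)
      (hproper : ∀ d ∈ C, ProperEdgeColoring L p1 p2 d)
      (hdemC : IsDemocracy C)
      (hq : q1 ≠ q2) (hqadj : G.Adj q1 q2) (hqout : G.EdgeOnOuter q1 q2)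
      (hz1 : G.Adj z p1) (hz2 : G.Adj z p2)
      (hLz : L z = L0 ∪ {c})
      (hC1 : fstColors C = (L0 : Set ℕ)) (hC2 : sndColors C = (L0 : Set ℕ))
      (hab : a ≠ b) (hL0ab : (L0 : Set ℕ) = {a, b})
      (hC' : C' = {(c, a), (c, b)})
      (hrec : IsHarmonica L (G.deleteVerts {p2}) z p1 q1 q2 C') :
      IsHarmonica L G p1 p2 q1 q2 C

/-- `(G, L)` is a coloring harmonica from `uv` to `w` (source `Sum.inr (u, v)`)
or from `u` to `w` (source `Sum.inl u`). -/
inductive IsColoringHarmonica {V : Type u} [DecidableEq V] :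
    PlaneGraph V → (V → Finset ℕ) → V ⊕ V × V → V → Prop where
  /-- `G` is a triangle with vertex set `{u, v, w}`, `L(u) = L(v) = L(w)` and
  `|L(u)| = 2`. -/
  | tri (G : PlaneGraph V) (L : V → Finset ℕ) (u v w : V)
      (hconn : G.Connected) (huv : u ≠ v) (huw : u ≠ w) (hvw : v ≠ w)
      (hu : G.OnOuter u) (hv : G.OnOuter v) (hw : G.OnOuter w)
      (huvout : G.EdgeOnOuter u v)
      (hverts : G.verts = {u, v, w})
      (hadjuv : G.Adj u v) (hadjvw : G.Adj v w) (hadjuw : G.Adj u w)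
      (hLuv : L u = L v) (hLvw : L v = L w) (hcard : (L u).card = 2) :
      IsColoringHarmonica G L (Sum.inr (u, v)) w
  /-- There is a triangle `uvz` on the outer face; delete one or both of
  `u, v` and recurse from `z`. -/
  | step (G : PlaneGraph V) (L : V → Finset ℕ) (u v w z : V) (s : Set V)
      (hconn : G.Connected) (huv : u ≠ v) (huw : u ≠ w) (hvw : v ≠ w)
      (hu : G.OnOuter u) (hv : G.OnOuter v) (hw : G.OnOuter w)
      (huvout : G.EdgeOnOuter u v)
      (hadjuv : G.Adj u v) (hadjuz : G.Adj u z) (hadjvz : G.Adj v z)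
      (hz : G.OnOuter z)
      (hLuv : L u = L v) (hsub : L u ⊆ L z)
      (hcardu : (L u).card = 2) (hcardz : (L z).card = 3)
      (hs : s = {u} ∨ s = {v} ∨ s = ({u, v} : Set V))
      (hrec : IsColoringHarmonica (G.deleteVerts s)
        (Function.update L z (L z \ L u)) (Sum.inl z) w) :
      IsColoringHarmonica G L (Sum.inr (u, v)) w
  /-- `|L(u)| = 1`, `u` sits on a triangle `uxy`; delete `u` and recurse
  from `xy`. -/
  | vert (G : PlaneGraph V) (L : V → Finset ℕ) (u w x y : V)
      (hconn : G.Connected) (huw : u ≠ w)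
      (hu : G.OnOuter u) (hw : G.OnOuter w)
      (hx : G.OnOuter x) (hy : G.OnOuter y)
      (hadjux : G.Adj u x) (hadjuy : G.Adj u y) (hadjxy : G.Adj x y)
      (hcardu : (L u).card = 1)
      (hLxy : L x \ L u = L y \ L u) (hcardx : (L x \ L u).card = 2)
      (hrec : IsColoringHarmonica (G.deleteVerts {u})
        (Function.update (Function.update L x (L x \ L u)) y (L y \ L u))
        (Sum.inr (x, y)) w) :
      IsColoringHarmonica G L (Sum.inl u) w

/-- `(G, L)` contains a coloring harmonica `(H, L')` with the given source and
target: `H` is a subgraph of `G` and `L'` agrees with `L` on `V(H)`. -/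
def ContainsColoringHarmonica {V : Type u} [DecidableEq V] (G : PlaneGraph V)
    (L : V → Finset ℕ) (st : V ⊕ V × V) (w : V) : Prop :=
  ∃ (H : PlaneGraph V) (L' : V → Finset ℕ), H.IsSubgraph G ∧
    (∀ x ∈ H.verts, L' x = L x) ∧ IsColoringHarmonica H L' st w

/-- `v` is a cutvertex of the boundary of the outer face of `G`. -/
def BoundaryCutvertex {V : Type u} (G : PlaneGraph V) (v : V) : Prop :=
  ∃ a b : V, a ∈ G.boundaryVerts ∧ b ∈ G.boundaryVerts ∧ a ≠ v ∧ b ≠ v ∧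
    Relation.ReflTransGen (fun x y => G.Adj x y ∧ G.EdgeOnOuter x y) a b ∧
    ¬Relation.ReflTransGen
      (fun x y => G.Adj x y ∧ G.EdgeOnOuter x y ∧ x ≠ v ∧ y ≠ v) a b

open Classical in
/-- The list assignment of the democratic reduction `T(P, L0, x)`:
remove the colors of `L0` from the list of `x` and from the lists of all
neighbors of `P` other than `y`. -/
noncomputable def reducedL {V : Type u} (G : PlaneGraph V) (L : V → Finset ℕ)
    (L0 : Finset ℕ) (Q : List V) (x y : V) : V → Finset ℕ := fun w =>
  if w = x ∨ (w ≠ y ∧ ∃ p ∈ Q, G.Adj w p) then L w \ L0 else L w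

/-- The vertex set of the precolored subgraph of the democratic reduction:
`S ∖ V(P)`, together with `x` as an isolated vertex if its new list is
smaller than 3. -/
def reducedSverts {V : Type u} (Sverts : Set V) (Q : List V) (x : V)
    (L' : V → Finset ℕ) : Set V :=
  {v | (v ∈ Sverts ∧ v ∉ Q) ∨ (v = x ∧ (L' x).card < 3)}

/-- The adjacency of the precolored subgraph of the democratic reduction:
`S ∖ V(P)`. -/
def reducedSAdj {V : Type u} (SAdj : V → V → Prop) (Q : List V) : V → V → Prop :=
  fun u v => SAdj u v ∧ u ∉ Q ∧ v ∉ Q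

/-!
At every step of the recursion that defines a harmonica, the set `Φ` of extendable colorings of the
target edge equals the one computed in the smaller harmonica, so it is a government as soon as the
two base cases are. One inclusion follows the colors around the triangle of the step. For the other
one, the deleted vertices are recolored one at a time, which succeeds because each of them sees few
vertices of the rest of the harmonica besides the triangle.

That bound on the neighborhoods comes from outerplanarity: a neighbor too many would produce a `K₄`
minor each of whose branch sets reaches the boundary of the outer face. Such a minor is impossible.
Let `ℓ(ij, p)` be the change of `log (z - p)` along the path from `vᵢ` to `vⱼ`. Disjoint paths `ij`
and `kl` satisfy `ℓ(ij, k) + ℓ(kl, j) = ℓ(kl, i) + ℓ(ij, l)`, and as no `vᵢ` is enclosed by the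
triangle formed by the other three, also `ℓ(jk, i) + ℓ(kl, i) = ℓ(jl, i)`. These linear relations
force `ℓ(12, 0) + ℓ(01, 2) = ℓ(02, 1)`: the signed angles of the triangle `v₀v₁v₂` add up to zero.
But the exponentials of such angles multiply to `-1` in any triangle.
-/

/-! ### The change of the logarithm along a path -/

section LogChange

theorem exists_continuous_log {X : Type*} [TopologicalSpace X] [SimplyConnectedSpace X]
    [LocallyPathConnectedSpace X] {f : X → ℂ} (hf : Continuous f) (h0 : ∀ x, f x ≠ 0) :
    ∃ g : X → ℂ, Continuous g ∧ ∀ x, Complex.exp (g x) = f x := by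
  obtain ⟨x⟩ : Nonempty X := inferInstance
  obtain ⟨g, ⟨-, hg⟩, -⟩ := Complex.isCoveringMapOn_exp.existsUnique_continuousMap_lifts
    ⟨f, hf⟩ (a₀ := x) (Complex.exp_log (h0 x)) h0
  exact ⟨g, g.continuous, congrFun hg⟩

theorem sub_eq_sub_of_exp_eq_exp {X : Type*} [TopologicalSpace X] [PreconnectedSpace X]
    {f g : X → ℂ} (hf : Continuous f) (hg : Continuous g)
    (h : ∀ x, Complex.exp (f x) = Complex.exp (g x)) (x y : X) : f x - f y = g x - g y := by
  have hexp (x : X) : Complex.exp (f x - g x) = 1 := by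
    rw [Complex.exp_sub, h, div_self (Complex.exp_ne_zero _)]
  have hconst := Complex.isCoveringMap_exp.const_of_comp (hf.sub hg)
    (fun x y => Subtype.ext ((hexp x).trans (hexp y).symm)) x y
  simp only [Pi.sub_apply] at hconst
  linear_combination hconst

variable {a b c d p : ℂ}

/-- The change of a continuous branch of `log (z - p)` as `z` runs along `γ`. Its imaginary part is
the angle swept by `γ` as seen from `p`. The value is meaningless if `γ` passes through `p`. -/
noncomputable def logChange (γ : Path a b) (p : ℂ) : ℂ :=
  let g := Classical.epsilon fun g : C(unitInterval, ℂ) => ∀ t, Complex.exp (g t) = γ t - p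
  g 1 - g 0

theorem logChange_eq (γ : Path a b) {g : unitInterval → ℂ} (hg : Continuous g)
    (h : ∀ t, Complex.exp (g t) = γ t - p) : logChange γ p = g 1 - g 0 := by
  have hε := Classical.epsilon_spec
    (p := fun g : C(unitInterval, ℂ) => ∀ t, Complex.exp (g t) = γ t - p) ⟨⟨g, hg⟩, h⟩
  exact sub_eq_sub_of_exp_eq_exp (map_continuous _) hg (fun t => (hε t).trans (h t).symm) 1 0

theorem logChange_eq_of_exp_eq_neg (γ : Path a b) {g : unitInterval → ℂ} (hg : Continuous g)
    (h : ∀ t, Complex.exp (g t) = p - γ t) : logChange γ p = g 1 - g 0 := by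
  rw [logChange_eq γ (g := fun t => g t + Real.pi * Complex.I) (by fun_prop) fun t => ?_,
    add_sub_add_right_eq_sub]
  rw [Complex.exp_add, h, Complex.exp_pi_mul_I]
  ring

theorem exp_logChange (γ : Path a b) (hp : p ∉ range γ) :
    Complex.exp (logChange γ p) = (b - p) / (a - p) := by
  obtain ⟨g, hg, hexp⟩ := exists_continuous_log
    (f := fun t => γ.extend t - p) (γ.continuous_extend.sub continuous_const) fun t h0 =>
      hp (γ.extend_range ▸ ⟨t, sub_eq_zero.1 h0⟩)
  rw [logChange_eq γ (g := fun t => g t) (by fun_prop) fun t => by rw [hexp, γ.extend_apply],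
    Complex.exp_sub, hexp, hexp]
  simp

/-- Both sides are the change of `log (γ s - δ t)` from one corner of the square to the opposite
one, along the two boundary routes. -/
theorem logChange_add_logChange (γ : Path a b) (δ : Path c d) (h : Disjoint (range γ) (range δ)) :
    logChange γ c + logChange δ b = logChange δ a + logChange γ d := by
  obtain ⟨g, hg, hexp⟩ := exists_continuous_log (X := ℝ × ℝ)
    (f := fun x => γ.extend x.1 - δ.extend x.2)
    ((γ.continuous_extend.comp continuous_fst).sub (δ.continuous_extend.comp continuous_snd))
    fun x h0 => disjoint_left.1 h (γ.extend_range ▸ mem_range_self x.1)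
      (sub_eq_zero.1 h0 ▸ δ.extend_range ▸ mem_range_self x.2)
  rw [logChange_eq γ (g := fun t => g (t, 0)) (by fun_prop) fun t => by simp [hexp],
    logChange_eq γ (g := fun t => g (t, 1)) (by fun_prop) fun t => by simp [hexp],
    logChange_eq_of_exp_eq_neg δ (g := fun t => g (1, t)) (by fun_prop) fun t => by simp [hexp],
    logChange_eq_of_exp_eq_neg δ (g := fun t => g (0, t)) (by fun_prop) fun t => by simp [hexp]]
  simp only [Icc.coe_zero, Icc.coe_one]
  ring

theorem logChange_of_norm_lt (γ : Path a b) (h : ∀ t, ‖γ t‖ < ‖p‖) :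
    logChange γ p = Complex.log (1 - b / p) - Complex.log (1 - a / p) := by
  have hp : p ≠ 0 := norm_pos_iff.1 ((norm_nonneg _).trans_lt (h 0))
  have hslit (t : unitInterval) : 1 - γ t / p ∈ Complex.slitPlane := by
    rw [sub_eq_add_neg]
    apply Complex.mem_slitPlane_of_norm_lt_one
    rw [norm_neg, norm_div, div_lt_one (norm_pos_iff.2 hp)]
    exact h t
  rw [logChange_eq γ (g := fun t => Complex.log (1 - γ t / p) + Complex.log (-p)) ?_ fun t => ?_]
  · simp
  · exact (Continuous.clog (by fun_prop) hslit).add continuous_const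
  · rw [Complex.exp_add, Complex.exp_log (Complex.slitPlane_ne_zero (hslit t)),
      Complex.exp_log (neg_ne_zero.2 hp)]
    field_simp
    ring

/-- A closed curve does not wind around a point that can be joined to points far away from it:
moving `p` to such a point changes the three terms by a telescoping sum. -/
theorem logChange_triangle (α : Path a b) (β : Path b c) (γ : Path a c)
    (hp : ¬Bornology.IsBounded (pathComponentIn (range α ∪ range β ∪ range γ)ᶜ p)) :
    logChange α p + logChange β p = logChange γ p := by
  obtain ⟨R, hR⟩ := ((isCompact_range α.continuous).union (isCompact_range β.continuous)).union
    (isCompact_range γ.continuous) |>.isBounded.exists_norm_le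
  obtain ⟨q, ⟨δ, hδ⟩, hq⟩ : ∃ q ∈ pathComponentIn (range α ∪ range β ∪ range γ)ᶜ p, R < ‖q‖ := by
    by_contra! hbdd
    exact hp (isBounded_iff_forall_norm_le.2 ⟨R, hbdd⟩)
  have hdisj : Disjoint (range α ∪ range β ∪ range γ) (range δ) :=
    disjoint_right.2 (forall_mem_range.2 hδ)
  rw [disjoint_union_left, disjoint_union_left] at hdisj
  have hα := logChange_add_logChange α δ hdisj.1.1
  have hβ := logChange_add_logChange β δ hdisj.1.2
  have hγ := logChange_add_logChange γ δ hdisj.2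
  rw [logChange_of_norm_lt α fun t => (hR _ (.inl (.inl ⟨t, rfl⟩))).trans_lt hq] at hα
  rw [logChange_of_norm_lt β fun t => (hR _ (.inl (.inr ⟨t, rfl⟩))).trans_lt hq] at hβ
  rw [logChange_of_norm_lt γ fun t => (hR _ (.inr ⟨t, rfl⟩)).trans_lt hq] at hγ
  linear_combination hα + hβ - hγ

end LogChange

/-! ### Outerplanarity -/

/-- The three exchange relations and the four triangle relations force the signed angles of the
triangle `v 0`, `v 1`, `v 2` to add up to zero, while their exponentials multiply to `-1`. -/
theorem not_outer_K4_drawing_complex (v : Fin 4 → ℂ) (γ : ∀ i j, Path (v i) (v j))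
    (hdisj : ∀ i j k l, [i, j, k, l].Nodup → Disjoint (range (γ i j)) (range (γ k l)))
    (hfar : ∀ i j k l, [i, j, k, l].Nodup → ¬Bornology.IsBounded
      (pathComponentIn (range (γ j k) ∪ range (γ k l) ∪ range (γ j l))ᶜ (v i))) : False := by
  have triangle i j k l (h : [i, j, k, l].Nodup) := logChange_triangle _ _ _ (hfar i j k l h)
  have exchange i j k l (h : [i, j, k, l].Nodup) :=
    logChange_add_logChange _ _ (hdisj i j k l h)
  have hnotMem i j k l (h : [i, j, k, l].Nodup) : v k ∉ range (γ i j) := fun hk =>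
    disjoint_left.1 (hdisj i j k l h) hk ⟨0, (γ k l).source⟩
  have hangle : logChange (γ 1 2) (v 0) + logChange (γ 0 1) (v 2) = logChange (γ 0 2) (v 1) := by
    linear_combination (1 / 2 : ℂ) *
      (exchange 0 1 2 3 (by decide) - exchange 0 2 1 3 (by decide) - exchange 0 3 1 2 (by decide)
        + triangle 0 1 2 3 (by decide) - triangle 1 0 2 3 (by decide)
        + triangle 2 0 1 3 (by decide) + triangle 3 0 1 2 (by decide))
  have hexp := congrArg Complex.exp hangle
  rw [Complex.exp_add, exp_logChange _ (hnotMem 1 2 0 3 (by decide)),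
    exp_logChange _ (hnotMem 0 1 2 3 (by decide)),
    exp_logChange _ (hnotMem 0 2 1 3 (by decide))] at hexp
  have hne i j k l (h : [i, j, k, l].Nodup) : v i - v k ≠ 0 := fun h0 =>
    hnotMem i j k l h ⟨0, (γ i j).source.trans (sub_eq_zero.1 h0)⟩
  have h01 := hne 0 2 1 3 (by decide)
  have h02 := hne 0 1 2 3 (by decide)
  have h10 := hne 1 2 0 3 (by decide)
  have h12 := hne 1 0 2 3 (by decide)
  have h20 := hne 2 1 0 3 (by decide)
  field_simp at hexp
  have hprod : (v 0 - v 1) * (v 1 - v 2) * (v 2 - v 0) = 0 := by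
    linear_combination (1 / 2 : ℂ) * hexp
  exact mul_ne_zero (mul_ne_zero h01 h12) h20 hprod

theorem not_outer_K4_drawing {E : Type*} [NormedAddCommGroup E] [NormedSpace ℝ E] (e : E ≃L[ℝ] ℂ)
    (v : Fin 4 → E) (γ : ∀ i j, Path (v i) (v j))
    (hdisj : ∀ i j k l, [i, j, k, l].Nodup → Disjoint (range (γ i j)) (range (γ k l)))
    (hfar : ∀ i j k l, [i, j, k, l].Nodup → ¬Bornology.IsBounded
      (pathComponentIn (range (γ j k) ∪ range (γ k l) ∪ range (γ j l))ᶜ (v i))) : False := by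
  refine not_outer_K4_drawing_complex (e ∘ v) (fun i j => (γ i j).map e.continuous)
    (fun i j k l h => ?_) (fun i j k l h hbdd => ?_)
  · simpa only [Path.map_coe, range_comp, disjoint_image_iff e.injective] using hdisj i j k l h
  · refine hfar i j k l h ((e.antilipschitz.isBounded_preimage hbdd).subset fun w hw => ?_)
    simp only [Path.map_coe, range_comp, ← image_union, ← image_compl_eq e.bijective]
    exact JoinedIn.map hw e.continuous

/-! ### Connected vertex sets in a plane graph -/

namespace PlaneGraph

variable {V : Type u} {G : PlaneGraph V} {s Y Z : Set V} {u v y : V}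

/-- The abstract graph underlying a plane graph; the elements of `V` outside `G.verts` become
isolated vertices. -/
def toSimpleGraph (G : PlaneGraph V) : SimpleGraph V where
  Adj := G.Adj
  symm := ⟨G.adj_symm⟩
  loopless := ⟨G.adj_irrefl⟩

theorem Adj.ne (h : G.Adj u v) : u ≠ v := SimpleGraph.Adj.ne (G := G.toSimpleGraph) h

theorem Adj.symm (h : G.Adj u v) : G.Adj v u := G.adj_symm u v h

theorem Adj.left_mem (h : G.Adj u v) : u ∈ G.verts := G.adj_mem u v h

theorem Adj.right_mem (h : G.Adj u v) : v ∈ G.verts := h.symm.left_mem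

/-- `Y` induces a connected subgraph of `G`. -/
def ConnectedOn (G : PlaneGraph V) (Y : Set V) : Prop := (G.toSimpleGraph.induce Y).Connected

/-- Some edge of `G` joins `Y` to `Z`. -/
def Touches (G : PlaneGraph V) (Y Z : Set V) : Prop := ∃ y ∈ Y, ∃ z ∈ Z, G.Adj y z

theorem Touches.symm (h : G.Touches Y Z) : G.Touches Z Y := by
  obtain ⟨y, hy, z, hz, hyz⟩ := h
  exact ⟨z, hz, y, hy, hyz.symm⟩

theorem connectedOn_singleton (G : PlaneGraph V) (v : V) : G.ConnectedOn {v} := by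
  rw [ConnectedOn, SimpleGraph.induce_singleton_eq_top]
  exact SimpleGraph.connected_top

theorem ConnectedOn.union (hY : G.ConnectedOn Y) (hZ : G.ConnectedOn Z) (h : G.Touches Y Z) :
    G.ConnectedOn (Y ∪ Z) := by
  obtain ⟨y, hy, z, hz, hyz⟩ := h
  exact SimpleGraph.connected_induce_union hY.preconnected hZ.preconnected hy hz hyz

theorem ConnectedOn.insert (hY : G.ConnectedOn Y) (hy : y ∈ Y) (h : G.Adj v y) :
    G.ConnectedOn (insert v Y) :=
  (G.connectedOn_singleton v).union hY ⟨v, rfl, y, hy, h⟩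

theorem ConnectedOn.of_deleteVerts (h : (G.deleteVerts s).ConnectedOn Y) : G.ConnectedOn Y :=
  SimpleGraph.Connected.mono (fun _ _ huv => And.left huv) h

/-! ### The drawing of a vertex set -/

/-- The point set of the drawing of the subgraph induced by `Y`. -/
def drawing (G : PlaneGraph V) (Y : Set V) : Set (ℝ × ℝ) := (G.deleteVerts Yᶜ).image

theorem mem_image {p : ℝ × ℝ} :
    p ∈ G.image ↔ (∃ v ∈ G.verts, G.pos v = p) ∨ ∃ u v, G.Adj u v ∧ p ∈ G.arc s(u, v) := by
  simp [image]

theorem mem_drawing {p : ℝ × ℝ} :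
    p ∈ G.drawing Y ↔ (∃ v ∈ Y, v ∈ G.verts ∧ G.pos v = p) ∨
      ∃ u ∈ Y, ∃ v ∈ Y, G.Adj u v ∧ p ∈ G.arc s(u, v) := by
  simp only [drawing, mem_image, deleteVerts, mem_sdiff, mem_compl_iff, not_not]
  grind

theorem drawing_subset_image : G.drawing Y ⊆ G.image := by
  intro p hp
  rw [mem_drawing] at hp
  rw [mem_image]
  grind

theorem pos_mem_drawing (hv : v ∈ G.verts) (hvY : v ∈ Y) : G.pos v ∈ G.drawing Y :=
  mem_drawing.2 (.inl ⟨v, hvY, hv, rfl⟩)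

theorem isClosed_image (G : PlaneGraph V) : IsClosed G.image := by
  have hedges : {e : V × V | G.Adj e.1 e.2}.Finite :=
    (G.finite_verts.prod G.finite_verts).subset fun e he =>
      ⟨Adj.left_mem he, Adj.right_mem he⟩
  have himage : G.image =
      G.pos '' G.verts ∪ ⋃ e ∈ {e : V × V | G.Adj e.1 e.2}, G.arc s(e.1, e.2) := by
    ext p
    simp [image]
  rw [himage]
  refine ((G.finite_verts.image _).isCompact.union
    (hedges.isCompact_biUnion fun e he => ?_)).isClosed
  obtain ⟨f, hf, -, hfarc, -⟩ := G.arc_arc _ _ he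
  exact hfarc ▸ isCompact_Icc.image_of_continuousOn hf

theorem disjoint_drawing (h : Disjoint Y Z) : Disjoint (G.drawing Y) (G.drawing Z) := by
  rw [disjoint_left] at h ⊢
  intro p hY hZ
  rw [mem_drawing] at hY hZ
  rcases hY with ⟨y, hy, hyG, rfl⟩ | ⟨u, hu, v, hv, huv, hp⟩ <;>
    rcases hZ with ⟨z, hz, hzG, hzp⟩ | ⟨u', hu', v', hv', huv', hp'⟩
  · exact h hy (G.pos_injOn hzG hyG hzp ▸ hz)
  · rcases G.arc_avoid u' v' huv' y hyG hp' with rfl | rfl <;> exact h hy ‹_›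
  · rcases G.arc_avoid u v huv z hzG (hzp ▸ hp) with rfl | rfl <;> exact h ‹_› hz
  · have hne : s(u, v) ≠ s(u', v') := fun he => by
      rcases Sym2.eq_iff.1 he with ⟨rfl, -⟩ | ⟨rfl, -⟩ <;> exact h hu ‹_›
    obtain ⟨w, ⟨hw, hw'⟩, -⟩ := G.arc_meet u v u' v' huv huv' hne ⟨hp, hp'⟩
    exact h (pair_subset hu hv hw) (pair_subset hu' hv' hw')

theorem ConnectedOn.joinedIn_drawing (hY : G.ConnectedOn Y) {x y : Y} (hx : (x : V) ∈ G.verts) :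
    JoinedIn (G.drawing Y) (G.pos x) (G.pos y) := by
  have hreach := (SimpleGraph.reachable_iff_reflTransGen x y).1 (hY.preconnected x y)
  induction hreach with
  | refl => exact .refl (pos_mem_drawing hx x.2)
  | @tail u v _ huv ih =>
    obtain ⟨f, hf, -, hfarc, h0, h1⟩ := G.arc_arc u v huv
    refine ih.trans (JoinedIn.ofLine hf h0 h1 (hfarc ▸ fun p hp => ?_))
    exact mem_drawing.2 (.inr ⟨u, u.2, v, v.2, huv, hp⟩)

/-! ### Outer vertices -/

theorem OnOuter.not_isBounded_pathComponentIn {T : Set (ℝ × ℝ)} (hv : G.OnOuter v)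
    (hT : IsClosed T) (hTG : T ⊆ G.image) (hvT : G.pos v ∉ T) :
    ¬Bornology.IsBounded (pathComponentIn Tᶜ (G.pos v)) := by
  obtain ⟨o, ho, hoG, hunbdd⟩ := mem_closure_iff.1 (frontier_subset_closure hv) _
    (hT.isOpen_compl.pathComponentIn _) (mem_pathComponentIn_self hvT)
  have hopen : IsOpen (connectedComponentIn G.imageᶜ o) :=
    G.isClosed_image.isOpen_compl.connectedComponentIn
  have hconn := hopen.isConnected_iff_isPathConnected.1
    (isConnected_connectedComponentIn_iff.2 hoG)
  refine fun hbdd => hunbdd (hbdd.subset fun w hw => JoinedIn.trans ho ?_)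
  exact (hconn.joinedIn o (mem_connectedComponentIn hoG) w hw).mono
    ((connectedComponentIn_subset _ _).trans (compl_subset_compl.2 hTG))

theorem EdgeOnOuter.mem_boundaryVerts (h : G.EdgeOnOuter u v) (huv : G.Adj u v) :
    u ∈ G.boundaryVerts ∧ v ∈ G.boundaryVerts := by
  obtain ⟨f, -, -, hfarc, rfl0, rfl1⟩ := G.arc_arc u v huv
  exact ⟨⟨huv.left_mem, h (hfarc ▸ ⟨0, by simp, rfl0⟩)⟩,
    ⟨huv.right_mem, h (hfarc ▸ ⟨1, by simp, rfl1⟩)⟩⟩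

/-- `Y` is connected and reaches the boundary of the outer face: a branch set of a minor which is
outerplanar in the drawing of `G`. -/
def OuterConnected (G : PlaneGraph V) (Y : Set V) : Prop :=
  G.ConnectedOn Y ∧ (Y ∩ G.boundaryVerts).Nonempty

theorem not_outer_K4_minor {Y : Fin 4 → Set V} (hconn : ∀ i, G.OuterConnected (Y i))
    (hdisj : Pairwise (Function.onFun Disjoint Y))
    (htouch : Pairwise fun i j => G.Touches (Y i) (Y j)) : False := by
  choose v hvY hv using fun i => (hconn i).2
  have hunion i j : G.ConnectedOn (Y i ∪ Y j) := by
    obtain rfl | hij := eq_or_ne i j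
    · exact (union_self (Y i)).symm ▸ (hconn i).1
    · exact (hconn i).1.union (hconn j).1 (htouch hij)
  choose γ hγ using fun i j => (hunion i j).joinedIn_drawing
    (x := ⟨v i, .inl (hvY i)⟩) (y := ⟨v j, .inr (hvY j)⟩) (hv i).1
  have hdraw i j k l (h : [i, j, k, l].Nodup) :
      Disjoint (G.drawing (Y i ∪ Y j)) (G.drawing (Y k ∪ Y l)) := by
    refine disjoint_drawing ?_
    simp only [disjoint_union_left, disjoint_union_right]
    simp only [List.nodup_cons, List.mem_cons, not_or] at h
    exact ⟨⟨hdisj h.1.2.1, hdisj h.2.1.1⟩, hdisj h.1.2.2.1, hdisj h.2.1.2.1⟩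
  have hrange i j : range (γ i j) ⊆ G.drawing (Y i ∪ Y j) := range_subset_iff.2 (hγ i j)
  have hclosed i j : IsClosed (range (γ i j)) := (isCompact_range (γ i j).continuous).isClosed
  have havoid i j k l (h : [i, j, k, l].Nodup) : G.pos (v i) ∉ range (γ k l) := fun hi =>
    disjoint_left.1 (hdraw i j k l h) (pos_mem_drawing (hv i).1 (.inl (hvY i))) (hrange k l hi)
  refine not_outer_K4_drawing Complex.equivRealProdCLM.symm (G.pos ∘ v) γ
    (fun i j k l h => (hdraw i j k l h).mono (hrange i j) (hrange k l)) fun i j k l h => ?_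
  refine (hv i).2.not_isBounded_pathComponentIn (((hclosed j k).union (hclosed k l)).union
    (hclosed j l)) ?_ ?_
  · have himage i j := (hrange i j).trans (G.drawing_subset_image)
    exact union_subset (union_subset (himage j k) (himage k l)) (himage j l)
  · rintro ((hi | hi) | hi)
    · exact havoid i l j k (by grind) hi
    · exact havoid i j k l h hi
    · exact havoid i k j l (by grind) hi

end PlaneGraph

/-! ### Bridges of an edge -/

namespace PlaneGraph

variable {V : Type u} {G : PlaneGraph V} {Y Z : Set V} {u v x : V}

/-- A bridge, in Tutte's sense, of the edge `uv`: an outer-connected set of other vertices attached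
to both ends. -/
structure IsOuterBridge (G : PlaneGraph V) (u v : V) (Y : Set V) : Prop where
  outerConnected : G.OuterConnected Y
  left_notMem : u ∉ Y
  right_notMem : v ∉ Y
  touches_left : G.Touches {u} Y
  touches_right : G.Touches {v} Y

theorem touches_singleton_left : G.Touches {v} Y ↔ ∃ y ∈ Y, G.Adj v y := by
  simp [Touches]

theorem touches_singleton : G.Touches {u} {v} ↔ G.Adj u v := by
  simp [Touches]

theorem outerConnected_singleton (hv : v ∈ G.boundaryVerts) : G.OuterConnected {v} :=
  ⟨G.connectedOn_singleton v, v, rfl, hv⟩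

theorem isOuterBridge_singleton (hx : x ∈ G.boundaryVerts) (hu : G.Adj u x) (hv : G.Adj v x) :
    G.IsOuterBridge u v {x} :=
  ⟨outerConnected_singleton hx, hu.ne, hv.ne, touches_singleton.2 hu, touches_singleton.2 hv⟩

theorem IsOuterBridge.not_touches (hY : G.IsOuterBridge u v Y) (hZ : G.IsOuterBridge u v Z)
    (huv : G.Adj u v) (hu : u ∈ G.boundaryVerts) (hv : v ∈ G.boundaryVerts) (hYZ : Disjoint Y Z) :
    ¬G.Touches Y Z := by
  intro htouch
  have huvt := touches_singleton.2 huv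
  refine not_outer_K4_minor (G := G) (Y := ![{u}, {v}, Y, Z]) ?_ ?_ ?_
  · simp [Fin.forall_fin_succ, outerConnected_singleton hu, outerConnected_singleton hv,
      hY.outerConnected, hZ.outerConnected]
  · simp [pairwise_disjoint_on, Fin.forall_fin_succ, huv.ne.symm, hY.left_notMem,
      hY.right_notMem, hZ.left_notMem, hZ.right_notMem, hYZ]
  · simp [Pairwise, Fin.forall_fin_succ, huvt, huvt.symm, hY.touches_left, hY.touches_left.symm,
      hY.touches_right, hY.touches_right.symm, hZ.touches_left, hZ.touches_left.symm,
      hZ.touches_right, hZ.touches_right.symm, htouch, htouch.symm]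

end PlaneGraph

/-! ### Caps -/

namespace PlaneGraph

variable {V : Type u} {G : PlaneGraph V} {L : V → Finset ℕ} {s Y Z : Set V} {u v w x z : V}

/-- Every vertex with fewer than five colors is on the outer boundary. This is the only property of
the lists of a canvas which the structure of a harmonica depends on. -/
def ShortListsOuter (G : PlaneGraph V) (L : V → Finset ℕ) : Prop :=
  ∀ v ∈ G.verts, (L v).card < 5 → v ∈ G.boundaryVerts

/-- The vertices beyond an edge `uv` of a harmonica: if there are any, then they induce a connected
graph with a common neighbor of `u` and `v`. That neighbor is recorded as having a short list, and
not as being an outer vertex, because this carries over from a subgraph of `G` to `G`. -/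
def IsCap (G : PlaneGraph V) (L : V → Finset ℕ) (u v : V) (Y : Set V) : Prop :=
  Y.Nonempty → G.ConnectedOn Y ∧ u ∉ Y ∧ v ∉ Y ∧ ∃ x ∈ Y, G.Adj x u ∧ G.Adj x v ∧ (L x).card < 5

theorem IsCap.symm (h : G.IsCap L u v Y) : G.IsCap L v u Y := fun hY => by
  obtain ⟨hconn, hu, hv, x, hx, hxu, hxv, hLx⟩ := h hY
  exact ⟨hconn, hv, hu, x, hx, hxv, hxu, hLx⟩

theorem IsCap.of_deleteVerts (h : (G.deleteVerts s).IsCap L u v Y) : G.IsCap L u v Y := fun hY => by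
  obtain ⟨hconn, hu, hv, x, hx, hxu, hxv, hLx⟩ := h hY
  exact ⟨hconn.of_deleteVerts, hu, hv, x, hx, hxu.1, hxv.1, hLx⟩

theorem IsCap.connectedOn_insert (h : G.IsCap L u v Y) : G.ConnectedOn (insert u Y) := by
  obtain rfl | hY := Y.eq_empty_or_nonempty
  · simpa using G.connectedOn_singleton u
  · obtain ⟨hconn, -, -, x, hx, hxu, -⟩ := h hY
    exact hconn.insert hx hxu.symm

theorem IsCap.isOuterBridge (h : G.IsCap L u v Y) (hL : G.ShortListsOuter L) (hY : Y.Nonempty) :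
    G.IsOuterBridge u v Y := by
  obtain ⟨hconn, hu, hv, x, hx, hxu, hxv, hLx⟩ := h hY
  exact ⟨⟨hconn, x, hx, hL x hxu.left_mem hLx⟩, hu, hv, ⟨u, rfl, x, hx, hxu.symm⟩,
    ⟨v, rfl, x, hx, hxv.symm⟩⟩

theorem IsCap.not_touches (hY : G.IsCap L u v Y) (hL : G.ShortListsOuter L)
    (hZ : G.IsOuterBridge u v Z) (huv : G.Adj u v) (hu : u ∈ G.boundaryVerts)
    (hv : v ∈ G.boundaryVerts) (hYZ : Disjoint Z Y) : ¬G.Touches Z Y := by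
  rintro ⟨z, hz, y, hy, hzy⟩
  exact hZ.not_touches (hY.isOuterBridge hL ⟨y, hy⟩) huv hu hv hYZ ⟨z, hz, y, hy, hzy⟩

/-- A triangle `z u₁ u₂` in which `u₁` and `u₂` have short lists, with a cap on its edge `u₁u₂`. -/
structure CappedTriangle (G : PlaneGraph V) (L : V → Finset ℕ) (z u₁ u₂ : V) (Y : Set V) :
    Prop where
  adj_left : G.Adj z u₁
  adj_right : G.Adj z u₂
  adj : G.Adj u₁ u₂
  card_left : (L u₁).card < 5
  card_right : (L u₂).card < 5
  isCap : G.IsCap L u₁ u₂ Y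

variable {u₁ u₂ : V}

theorem CappedTriangle.of_deleteVerts (h : (G.deleteVerts s).CappedTriangle L z u₁ u₂ Y) :
    G.CappedTriangle L z u₁ u₂ Y :=
  ⟨h.adj_left.1, h.adj_right.1, h.adj.1, h.card_left, h.card_right, h.isCap.of_deleteVerts⟩

theorem CappedTriangle.connectedOn (h : G.CappedTriangle L z u₁ u₂ Y) :
    G.ConnectedOn (insert u₁ (insert u₂ Y)) :=
  h.isCap.symm.connectedOn_insert.insert (mem_insert u₂ Y) h.adj

/-- The branch set `{w, z}` is a bridge of `u₁u₂`, so that neither vertex sees the cap. -/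
theorem CappedTriangle.not_touches (h : G.CappedTriangle L z u₁ u₂ Y) (hL : G.ShortListsOuter L)
    (hz : z ∈ G.boundaryVerts) (hwz : w = z ∨ G.Adj w z) (hw₁ : w ≠ u₁) (hw₂ : w ≠ u₂)
    (hwY : w ∉ Y) (hzY : z ∉ Y) : ¬G.Touches {w} Y := by
  have hconn : G.ConnectedOn {w, z} := by
    rcases hwz with rfl | hwz
    · simpa using G.connectedOn_singleton w
    · exact (G.connectedOn_singleton z).insert rfl hwz
  have hbridge : G.IsOuterBridge u₁ u₂ {w, z} :=
    ⟨⟨hconn, z, by simp, hz⟩, by simp [hw₁.symm, h.adj_left.ne.symm],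
      by simp [hw₂.symm, h.adj_right.ne.symm], ⟨u₁, rfl, z, by simp, h.adj_left.symm⟩,
      ⟨u₂, rfl, z, by simp, h.adj_right.symm⟩⟩
  rintro ⟨_, rfl, y, hy, hwy⟩
  exact h.isCap.not_touches hL hbridge h.adj (hL _ h.adj.left_mem h.card_left)
    (hL _ h.adj.right_mem h.card_right) (by simp [hwY, hzY]) ⟨_, mem_insert _ _, y, hy, hwy⟩

theorem CappedTriangle.subsingleton_neighbors (h : G.CappedTriangle L z u₁ u₂ Y)
    (hL : G.ShortListsOuter L) (hz : z ∈ G.boundaryVerts) (hw : w ∈ G.boundaryVerts)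
    (hwz : G.Adj w z) (hw₁ : w ≠ u₁) (hw₂ : w ≠ u₂) (hwY : w ∉ Y) (hzY : z ∉ Y) :
    {x ∈ insert u₁ (insert u₂ Y) | G.Adj w x}.Subsingleton := by
  have hcap := h.not_touches hL hz (.inr hwz) hw₁ hw₂ hwY hzY
  have hnot : ¬(G.Adj w u₁ ∧ G.Adj w u₂) := fun ⟨h₁, h₂⟩ =>
    (isOuterBridge_singleton hw h₁.symm h₂.symm).not_touches
      (isOuterBridge_singleton hz h.adj_left.symm h.adj_right.symm) h.adj
      (hL _ h.adj.left_mem h.card_left) (hL _ h.adj.right_mem h.card_right)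
      (by simpa using hwz.ne) (touches_singleton.2 hwz)
  rw [touches_singleton_left] at hcap
  rintro x ⟨rfl | rfl | hx, hwx⟩ y ⟨rfl | rfl | hy, hwy⟩ <;> grind

end PlaneGraph

/-! ### Governments -/

theorem mem_fstColors {C : Set (ℕ × ℕ)} {a : ℕ} : a ∈ fstColors C ↔ ∃ b, (a, b) ∈ C := by
  simp [fstColors]

theorem mem_sndColors {C : Set (ℕ × ℕ)} {b : ℕ} : b ∈ sndColors C ↔ ∃ a, (a, b) ∈ C := by
  simp [sndColors]

theorem eq_singleton_prod_sndColors {C : Set (ℕ × ℕ)} {a : ℕ} (h : ∀ c ∈ C, c.1 = a) :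
    C = {a} ×ˢ sndColors C := by
  ext ⟨x, y⟩
  simp only [mem_prod, mem_singleton_iff, mem_sndColors]
  exact ⟨fun hxy => ⟨h _ hxy, x, hxy⟩, fun ⟨hx, x', hxy⟩ => by simpa [hx, ← h _ hxy] using hxy⟩

theorem nontrivial_of_card_eq_two {L0 : Finset ℕ} (h : L0.card = 2) : (L0 : Set ℕ).Nontrivial :=
  Finset.one_lt_card_iff_nontrivial.1 (by lia)

theorem isDictatorship_singleton_prod {c : ℕ} {W : Set ℕ} :
    IsDictatorship ({c} ×ˢ W) ↔ W.Nontrivial := by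
  constructor
  · rintro ⟨⟨⟨x, y⟩, hxy, ⟨x', y'⟩, hxy', hne⟩, -⟩
    obtain ⟨⟨rfl, hy⟩, rfl, hy'⟩ := And.intro hxy hxy'
    exact ⟨y, hy, y', hy', by simpa using hne⟩
  · rintro ⟨y, hy, y', hy', hne⟩
    exact ⟨⟨(c, y), ⟨rfl, hy⟩, (c, y'), ⟨rfl, hy'⟩, by simpa using hne⟩, .inl ⟨c, fun _ h => h.1⟩⟩

theorem isDemocracy_iff {C : Set (ℕ × ℕ)} :
    IsDemocracy C ↔ ∃ L0 : Finset ℕ, L0.card = 2 ∧ C = (L0 : Set ℕ).offDiag := by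
  have hpair (x y : ℕ) (hxy : x ≠ y) :
      (↑({x, y} : Finset ℕ) : Set ℕ).offDiag = {(x, y), (y, x)} := by
    ext ⟨a, b⟩
    simp only [Finset.coe_insert, Finset.coe_singleton, mem_offDiag, mem_insert_iff,
      mem_singleton_iff, Prod.mk.injEq]
    grind
  constructor
  · rintro ⟨x, y, hxy, rfl⟩
    exact ⟨{x, y}, Finset.card_pair hxy, (hpair x y hxy).symm⟩
  · rintro ⟨L0, hL0, rfl⟩
    obtain ⟨x, y, hxy, rfl⟩ := Finset.card_eq_two.1 hL0
    exact ⟨x, y, hxy, hpair x y hxy⟩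

theorem fstColors_offDiag {W : Set ℕ} (hW : W.Nontrivial) : fstColors W.offDiag = W := by
  ext a
  rw [mem_fstColors]
  exact ⟨fun ⟨b, h⟩ => h.1, fun ha => (hW.exists_ne a).imp fun b hb => ⟨ha, hb.1, hb.2.symm⟩⟩

theorem sndColors_preimage_swap (C : Set (ℕ × ℕ)) : sndColors (Prod.swap ⁻¹' C) = fstColors C := by
  ext; simp [mem_fstColors, mem_sndColors]

theorem preimage_swap_offDiag (W : Set ℕ) : Prod.swap ⁻¹' W.offDiag = W.offDiag := by
  ext ⟨a, b⟩
  simp only [mem_preimage, Prod.swap_prod_mk, mem_offDiag]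
  tauto

theorem IsDemocracy.eq_offDiag {C : Set (ℕ × ℕ)} {L0 : Finset ℕ} (hC : IsDemocracy C)
    (h : fstColors C = L0) : L0.card = 2 ∧ C = (L0 : Set ℕ).offDiag := by
  obtain ⟨L1, hL1, rfl⟩ := isDemocracy_iff.1 hC
  rw [fstColors_offDiag (nontrivial_of_card_eq_two hL1), Finset.coe_inj] at h
  exact h ▸ ⟨hL1, rfl⟩

theorem IsDictatorship.preimage_swap {C : Set (ℕ × ℕ)} (hC : IsDictatorship C) :
    IsDictatorship (Prod.swap ⁻¹' C) := by
  obtain ⟨⟨c, hc, d, hd, hcd⟩, h⟩ := hC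
  exact ⟨⟨c.swap, by simpa, d.swap, by simpa, Prod.swap_injective.ne hcd⟩,
    h.symm.imp (fun ⟨a, ha⟩ => ⟨a, fun e he => ha _ he⟩) fun ⟨a, ha⟩ => ⟨a, fun e he => ha _ he⟩⟩

theorem IsDemocracy.preimage_swap {C : Set (ℕ × ℕ)} (hC : IsDemocracy C) :
    IsDemocracy (Prod.swap ⁻¹' C) := by
  obtain ⟨L0, hL0, rfl⟩ := isDemocracy_iff.1 hC
  exact isDemocracy_iff.2 ⟨L0, hL0, preimage_swap_offDiag _⟩

theorem IsGovernment.preimage_swap {C : Set (ℕ × ℕ)} (hC : IsGovernment C) :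
    IsGovernment (Prod.swap ⁻¹' C) :=
  hC.imp .preimage_swap .preimage_swap

theorem IsDemocracy.not_fst_constant {C : Set (ℕ × ℕ)} (hC : IsDemocracy C) (a : ℕ) :
    ¬∀ c ∈ C, c.1 = a := by
  obtain ⟨x, y, hxy, rfl⟩ := hC
  exact fun h => hxy ((h (x, y) (by simp)).trans (h (y, x) (by simp)).symm)

theorem IsDemocracy.not_snd_constant {C : Set (ℕ × ℕ)} (hC : IsDemocracy C) (a : ℕ) :
    ¬∀ c ∈ C, c.2 = a := fun h => hC.preimage_swap.not_fst_constant a fun _ hc => h _ hc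

theorem not_snd_constant_singleton_prod {W : Set ℕ} (hW : W.Nontrivial) (c a : ℕ) :
    ¬∀ d ∈ ({c} ×ˢ W : Set (ℕ × ℕ)), d.2 = a := fun h => by
  obtain ⟨b, hb, hba⟩ := hW.exists_ne a
  exact hba (h (c, b) ⟨rfl, hb⟩)

/-! ### Oriented harmonicas -/

section OrientedHarmonica

variable {V : Type u} {G : PlaneGraph V} {L : V → Finset ℕ} {p1 p2 q1 q2 u v w z u₁ u₂ : V}
  {c : ℕ} {C : Set (ℕ × ℕ)} {W : Set ℕ} {L0 : Finset ℕ}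

theorem IsPathCanvas.symm (h : IsPathCanvas G p1 p2 L) : IsPathCanvas G p2 p1 L := by
  have hadj : pathAdj p2 p1 = pathAdj p1 p2 := by
    funext u v
    exact propext or_comm
  exact ⟨h.1.symm, by rw [pair_comm, hadj]; exact h.2⟩

theorem IsPathCanvas.adj (h : IsPathCanvas G p1 p2 L) : G.Adj p1 p2 :=
  h.2.sadj_sub _ _ (.inl ⟨rfl, rfl⟩)

theorem IsPathCanvas.left_mem_boundaryVerts (h : IsPathCanvas G p1 p2 L) :
    p1 ∈ G.boundaryVerts :=
  ⟨h.adj.left_mem, h.2.sverts_outer p1 (by simp)⟩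

theorem IsPathCanvas.shortListsOuter (h : IsPathCanvas G p1 p2 L) : G.ShortListsOuter L :=
  fun v hv hLv => ⟨hv, not_imp_comm.1 (h.2.card_inner v hv) (by lia)⟩

theorem IsPathCanvas.three_le_card (h : IsPathCanvas G p1 p2 L) (hv : v ∈ G.verts)
    (h1 : v ≠ p1) (h2 : v ≠ p2) : 3 ≤ (L v).card :=
  h.2.card_outside_S v hv (by simp [h1, h2])

/-- The data of rule (iii) of a harmonica in the case where the triangle `zwu` contains the edge
`zw` whose dictator is `z`. -/
structure SharedTriangle (G : PlaneGraph V) (L : V → Finset ℕ) (z w u : V) (c : ℕ)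
    (L0 : Finset ℕ) : Prop where
  canvas : IsPathCanvas G z w L
  adj_left : G.Adj z u
  adj_right : G.Adj w u
  card_eq_two : L0.card = 2
  notMem : c ∉ L0
  list_apex : L u = insert c L0
  mem_list : c ∈ L z

/-- The data of rule (iii) of a harmonica in the case where the triangle `zu₁u₂` contains the
dictator `z` but not the other end `w` of its edge. -/
structure FreeTriangle (G : PlaneGraph V) (L : V → Finset ℕ) (z w u₁ u₂ : V) (c : ℕ) (W : Set ℕ)
    (L0 : Finset ℕ) : Prop where
  canvas : IsPathCanvas G z w L
  left_ne : u₁ ≠ w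
  right_ne : u₂ ≠ w
  adj_left : G.Adj z u₁
  adj_right : G.Adj z u₂
  adj : G.Adj u₁ u₂
  card_eq_two : L0.card = 2
  notMem : c ∉ L0
  list_left : L u₁ = insert c L0
  list_right : L u₂ = insert c L0
  nontrivial : W.Nontrivial
  mem_list : c ∈ L z
  subset_list : W ⊆ L w
  notMem_colors : c ∉ W

/-- The data of rule (iv) of a harmonica. -/
structure DemocraticTriangle (G : PlaneGraph V) (L : V → Finset ℕ) (p1 p2 z q1 q2 : V) (c : ℕ)
    (L0 : Finset ℕ) : Prop where
  canvas : IsPathCanvas G p1 p2 L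
  adj_left : G.Adj z p1
  adj_right : G.Adj z p2
  card_eq_two : L0.card = 2
  notMem : c ∉ L0
  list_apex : L z = insert c L0
  subset_list_left : L0 ⊆ L p1
  subset_list_right : L0 ⊆ L p2
  left_target_mem : q1 ∈ G.boundaryVerts
  right_target_mem : q2 ∈ G.boundaryVerts

/-- Harmonicas whose rules are normalized: a dictator is the first vertex of its edge, a democracy
deletes the first vertex, and exchanging the ends of an edge is a rule of its own. -/
inductive IsOrientedHarmonica (L : V → Finset ℕ) :
    PlaneGraph V → V → V → V → V → Set (ℕ × ℕ) → Prop where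
  | swap_source {G : PlaneGraph V} {p1 p2 q1 q2 : V} {C : Set (ℕ × ℕ)}
      (h : IsOrientedHarmonica L G p1 p2 q1 q2 C) :
      IsOrientedHarmonica L G p2 p1 q1 q2 (Prod.swap ⁻¹' C)
  | swap_target {G : PlaneGraph V} {p1 p2 q1 q2 : V} {C : Set (ℕ × ℕ)}
      (h : IsOrientedHarmonica L G p1 p2 q1 q2 C) :
      IsOrientedHarmonica L G p1 p2 q2 q1 C
  | same {G : PlaneGraph V} {p1 p2 : V} {C : Set (ℕ × ℕ)}
      (hne : p1 ≠ p2) (hverts : G.verts = {p1, p2})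
      (hproper : ∀ c ∈ C, ProperEdgeColoring L p1 p2 c) (hC : IsGovernment C) :
      IsOrientedHarmonica L G p1 p2 p1 p2 C
  | cherry {G : PlaneGraph V} {z w q : V} {c : ℕ} {W : Set ℕ}
      (hverts : G.verts = {z, w, q}) (hzw : z ≠ w) (hwq : w ≠ q)
      (hzq : G.Adj z q) (hnadj : ¬G.Adj w q) (hq : 3 ≤ (L q).card) (hW : W.Nontrivial)
      (hproper : ∀ d ∈ {c} ×ˢ W, ProperEdgeColoring L z w d) :
      IsOrientedHarmonica L G z w z q ({c} ×ˢ W)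
  | shared {G : PlaneGraph V} {z w u q1 q2 : V} {c : ℕ} {L0 : Finset ℕ}
      (hT : SharedTriangle G L z w u c L0)
      (hrec : IsOrientedHarmonica L (G.deleteVerts {z}) w u q1 q2 (L0 : Set ℕ).offDiag) :
      IsOrientedHarmonica L G z w q1 q2 ({c} ×ˢ L0)
  | free {G : PlaneGraph V} {z w u₁ u₂ q1 q2 : V} {c : ℕ} {W : Set ℕ} {L0 : Finset ℕ}
      (hT : FreeTriangle G L z w u₁ u₂ c W L0)
      (hrec : IsOrientedHarmonica L (G.deleteVerts {z, w}) u₁ u₂ q1 q2 (L0 : Set ℕ).offDiag) :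
      IsOrientedHarmonica L G z w q1 q2 ({c} ×ˢ W)
  | democracy {G : PlaneGraph V} {p1 p2 z q1 q2 : V} {c : ℕ} {L0 : Finset ℕ}
      (hT : DemocraticTriangle G L p1 p2 z q1 q2 c L0)
      (hrec : IsOrientedHarmonica L (G.deleteVerts {p1}) z p2 q1 q2 ({c} ×ˢ L0)) :
      IsOrientedHarmonica L G p1 p2 q1 q2 (L0 : Set ℕ).offDiag

theorem IsOrientedHarmonica.of_preimage_swap
    (h : IsOrientedHarmonica L G p2 p1 q1 q2 (Prod.swap ⁻¹' C)) :
    IsOrientedHarmonica L G p1 p2 q1 q2 C := h.swap_source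

theorem IsOrientedHarmonica.swap_source_offDiag
    (h : IsOrientedHarmonica L G p1 p2 q1 q2 W.offDiag) :
    IsOrientedHarmonica L G p2 p1 q1 q2 W.offDiag :=
  preimage_swap_offDiag W ▸ h.swap_source

/-! ### Orienting a harmonica -/

theorem ProperEdgeColoring.swap {d : ℕ × ℕ} (h : ProperEdgeColoring L p1 p2 d) :
    ProperEdgeColoring L p2 p1 d.swap := ⟨h.2.1, h.1, h.2.2.symm⟩

theorem IsOrientedHarmonica.of_cherry (hcanvas : IsPathCanvas G z w L)
    (hproper : ∀ d ∈ C, ProperEdgeColoring L z w d) (hC : IsDictatorship C)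
    (hc : ∀ d ∈ C, d.1 = c) (hq : G.Adj q1 q2) (hverts : G.verts = {z, w, q1, q2})
    (hedges : ∀ u v, G.Adj u v → pathAdj z w u v ∨ pathAdj q1 q2 u v)
    (hz : ({z, w} ∩ {q1, q2} : Set V) = {z}) : IsOrientedHarmonica L G z w q1 q2 C := by
  wlog hzq : z = q1 generalizing q1 q2
  · refine (this hq.symm (by rw [hverts, pair_comm q1])
      (fun u v h => (hedges u v h).imp_right .symm) (by rwa [pair_comm q2]) ?_).swap_target
    have : z ∈ ({z, w} ∩ {q1, q2} : Set V) := hz ▸ rfl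
    exact this.2.resolve_left hzq
  subst hzq
  rw [eq_singleton_prod_sndColors hc] at hC hproper ⊢
  have hwq : w ≠ q2 := by
    rintro rfl
    have : w ∈ ({z, w} ∩ {z, w} : Set V) := by simp
    exact hcanvas.1 (hz ▸ this).symm
  have hnadj : ¬G.Adj w q2 := fun h => by
    have := hedges w q2 h
    simp only [pathAdj] at this
    grind [hcanvas.1, hq.ne]
  exact .cherry (by rw [hverts]; grind) hcanvas.1 hwq hq hnadj
    (hcanvas.three_le_card hq.right_mem hq.ne.symm hwq.symm)
    (isDictatorship_singleton_prod.1 hC) hproper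

theorem IsOrientedHarmonica.of_dict_of_ne (hcanvas : IsPathCanvas G z w L)
    (hproper : ∀ d ∈ C, ProperEdgeColoring L z w d) (hC : IsDictatorship C)
    (hc : ∀ d ∈ C, d.1 = c) (h₁ : G.Adj z u₁) (h₂ : G.Adj z u₂) (h₁₂ : G.Adj u₁ u₂)
    (hL0 : L0.card = 2) (hW : u₁ = w → sndColors C = L0) (hL₁ : u₁ ≠ w → L u₁ = L0 ∪ {c})
    (hw₂ : u₂ ≠ w) (hL₂ : L u₂ = L0 ∪ {c})
    (hrec : IsOrientedHarmonica L (G.deleteVerts ({z, w} \ {u₁, u₂})) u₁ u₂ q1 q2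
      (L0 : Set ℕ).offDiag) :
    IsOrientedHarmonica L G z w q1 q2 C := by
  have hcard := hcanvas.three_le_card h₂.right_mem h₂.ne.symm hw₂
  rw [Finset.union_singleton] at hL₁ hL₂
  have hcL0 : c ∉ L0 := fun h => by simp [hL₂, h, hL0] at hcard
  rw [eq_singleton_prod_sndColors hc] at hC hproper ⊢
  have hWnt := isDictatorship_singleton_prod.1 hC
  obtain ⟨b, hb⟩ := hWnt.nonempty
  have hcz : c ∈ L z := (hproper (c, b) ⟨rfl, hb⟩).1
  have hWsub : sndColors C ⊆ L w := fun a ha => (hproper (c, a) ⟨rfl, ha⟩).2.1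
  obtain rfl | hw₁ := eq_or_ne u₁ w
  · have hset : ({z, u₁} \ {u₁, u₂} : Set V) = {z} := by
      ext x; simp only [mem_sdiff, mem_insert_iff, mem_singleton_iff]; grind [h₁.ne, h₂.ne]
    rw [hset] at hrec
    rw [hW rfl]
    exact .shared ⟨hcanvas, h₂, h₁₂, hL0, hcL0, hL₂, hcz⟩ hrec
  · have hset : ({z, w} \ {u₁, u₂} : Set V) = {z, w} := by
      ext x; simp only [mem_sdiff, mem_insert_iff, mem_singleton_iff]; grind [h₁.ne, h₂.ne]
    rw [hset] at hrec
    exact .free ⟨hcanvas, hw₁, hw₂, h₁, h₂, h₁₂, hL0, hcL0, hL₁ hw₁, hL₂, hWnt, hcz, hWsub,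
      fun h => (hproper (c, c) ⟨rfl, h⟩).2.2 rfl⟩ hrec

theorem IsOrientedHarmonica.of_dict (hcanvas : IsPathCanvas G z w L)
    (hproper : ∀ d ∈ C, ProperEdgeColoring L z w d) (hC : IsDictatorship C)
    (hc : ∀ d ∈ C, d.1 = c) (h₁ : G.Adj z u₁) (h₂ : G.Adj z u₂) (h₁₂ : G.Adj u₁ u₂)
    (hL0 : L0.card = 2) (hW : u₁ = w ∨ u₂ = w → sndColors C = L0)
    (hL₁ : u₁ ≠ w → L u₁ = L0 ∪ {c}) (hL₂ : u₂ ≠ w → L u₂ = L0 ∪ {c})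
    (hrec : IsOrientedHarmonica L (G.deleteVerts ({z, w} \ {u₁, u₂})) u₁ u₂ q1 q2
      (L0 : Set ℕ).offDiag) :
    IsOrientedHarmonica L G z w q1 q2 C := by
  obtain hw₂ | rfl := ne_or_eq u₂ w
  · exact .of_dict_of_ne hcanvas hproper hC hc h₁ h₂ h₁₂ hL0 (fun h => hW (.inl h)) hL₁ hw₂
      (hL₂ hw₂) hrec
  · rw [pair_comm u₁] at hrec
    exact .of_dict_of_ne hcanvas hproper hC hc h₂ h₁ h₁₂.symm hL0 (fun _ => hW (.inr rfl))
      (fun h => (h rfl).elim) h₁₂.ne (hL₁ h₁₂.ne) hrec.swap_source_offDiag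

theorem IsOrientedHarmonica.of_democracy {a b : ℕ} (hcanvas : IsPathCanvas G p1 p2 L)
    (hproper : ∀ d ∈ C, ProperEdgeColoring L p1 p2 d) (hC : IsDemocracy C)
    (hqadj : G.Adj q1 q2) (hqout : G.EdgeOnOuter q1 q2) (h1 : G.Adj z p1) (h2 : G.Adj z p2)
    (hLz : L z = L0 ∪ {c}) (hfst : fstColors C = L0) (hab : (L0 : Set ℕ) = {a, b})
    (hrec : IsOrientedHarmonica L (G.deleteVerts {p1}) z p2 q1 q2 {(c, a), (c, b)}) :
    IsOrientedHarmonica L G p1 p2 q1 q2 C := by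
  obtain ⟨hcard, rfl⟩ := hC.eq_offDiag hfst
  rw [Finset.union_singleton] at hLz
  have hz := hcanvas.three_le_card h1.left_mem h1.ne h2.ne
  have hcL0 : c ∉ L0 := fun h => by simp [hLz, h, hcard] at hz
  have hsub : L0 ⊆ L p1 ∧ L0 ⊆ L p2 := by
    obtain ⟨x, y, hxy, rfl⟩ := Finset.card_eq_two.1 hcard
    have hx := hproper (x, y) (by simp [mem_offDiag, hxy])
    have hy := hproper (y, x) (by simp [mem_offDiag, hxy.symm])
    simp [Finset.insert_subset_iff, hx.1, hx.2.1, hy.1, hy.2.1]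
  have hq := hqout.mem_boundaryVerts hqadj
  refine .democracy ⟨hcanvas, h1, h2, hcard, hcL0, hLz, hsub.1, hsub.2, hq.1, hq.2⟩ ?_
  have hprod : ({c} ×ˢ (L0 : Set ℕ) : Set (ℕ × ℕ)) = {(c, a), (c, b)} := by
    rw [hab, singleton_prod, image_pair]
  rwa [hprod]

theorem IsHarmonica.isOrientedHarmonica (h : IsHarmonica L G p1 p2 q1 q2 C) :
    IsOrientedHarmonica L G p1 p2 q1 q2 C := by
  induction h with
  | same G p1 p2 q1 q2 C hcanvas hproper hgov hq hverts =>
    rcases hq with ⟨rfl, rfl⟩ | ⟨rfl, rfl⟩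
    · exact .same hcanvas.1 hverts hproper hgov
    · exact .swap_target (.same hcanvas.1 hverts hproper hgov)
  | cherry G p1 p2 q1 q2 z C hcanvas hproper hdict _ hqadj _ hverts hedges hz hzdict =>
    rcases hzdict with ⟨rfl, a, ha⟩ | ⟨rfl, a, ha⟩
    · exact .of_cherry hcanvas hproper hdict ha hqadj hverts hedges hz
    · exact .of_preimage_swap <| .of_cherry hcanvas.symm (fun d hd => (hproper _ hd).swap)
        hdict.preimage_swap (fun d hd => ha _ hd) hqadj (by rw [hverts, insert_comm])
        (fun u v h => (hedges u v h).imp_left .symm) (by rwa [pair_comm])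
  | dict G p1 p2 q1 q2 z w u1 u2 c L0 C C' hcanvas hproper hdict _ _ _ hz h1 h2 h12 hL0 hL1 hL2
      hu1 hu2 hdem hfst _ _ ih =>
    obtain ⟨-, rfl⟩ := hdem.eq_offDiag hfst
    rcases hz with ⟨rfl, rfl, hc, hw1, hw2⟩ | ⟨rfl, rfl, hc, hw1, hw2⟩
    · exact .of_dict hcanvas hproper hdict hc h1 h2 h12 hL0 (Or.rec hw1 hw2)
        (fun h => hL1 (mt hu1 h)) (fun h => hL2 (mt hu2 h)) ih
    · rw [pair_comm] at ih
      exact .of_preimage_swap <| .of_dict hcanvas.symm (fun d hd => (hproper _ hd).swap)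
        hdict.preimage_swap (fun d hd => hc _ hd) h1 h2 h12 hL0
        (by rw [sndColors_preimage_swap]; exact Or.rec hw1 hw2)
        (fun h => hL1 (mt hu1 h)) (fun h => hL2 (mt hu2 h)) ih
  | demo1 G p1 p2 q1 q2 z a b c L0 C C' hcanvas hproper hdem _ hqadj hqout hz1 hz2 hLz hfst _ _ hab
      hC' _ ih =>
    exact .of_democracy hcanvas hproper hdem hqadj hqout hz1 hz2 hLz hfst hab (hC' ▸ ih)
  | demo2 G p1 p2 q1 q2 z a b c L0 C C' hcanvas hproper hdem _ hqadj hqout hz1 hz2 hLz _ hsnd _ hab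
      hC' _ ih =>
    exact .of_preimage_swap <| .of_democracy hcanvas.symm (fun d hd => (hproper _ hd).swap)
      hdem.preimage_swap hqadj hqout hz2 hz1 hLz (by rwa [← sndColors_preimage_swap]) hab (hC' ▸ ih)

end OrientedHarmonica

/-! ### The shape of a harmonica -/

namespace PlaneGraph

variable {V : Type u} {G : PlaneGraph V} {L : V → Finset ℕ} {s Y : Set V} {q1 q2 v w z : V}

/-- The vertices `Y` beyond the edge `zw` of a harmonica whose dictator is `z`: a cap, or a graph
which is attached to `z` alone and contains the target edge `q1q2` except possibly for `z`. -/
inductive IsDictatorCap (G : PlaneGraph V) (L : V → Finset ℕ) (q1 q2 z w : V) : Set V → Prop where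
  | shared {Y : Set V} (h : G.IsCap L z w Y) : IsDictatorCap G L q1 q2 z w Y
  | leaf {q : V} (h1 : w ≠ q1) (h2 : w ≠ q2) (hq : q = q1 ∨ q = q2) (hzq : G.Adj z q) :
      IsDictatorCap G L q1 q2 z w {q}
  | free {u₁ u₂ : V} {Y : Set V} (h1 : w ≠ q1) (h2 : w ≠ q2) (h : G.CappedTriangle L z u₁ u₂ Y) :
      IsDictatorCap G L q1 q2 z w (insert u₁ (insert u₂ Y))

theorem IsDictatorCap.of_deleteVerts (h : (G.deleteVerts s).IsDictatorCap L q1 q2 z w Y) :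
    G.IsDictatorCap L q1 q2 z w Y := by
  cases h with
  | shared h => exact .shared h.of_deleteVerts
  | leaf h1 h2 hq hzq => exact .leaf h1 h2 hq hzq.1
  | free h1 h2 h => exact .free h1 h2 h.of_deleteVerts

theorem IsDictatorCap.swap_target (h : G.IsDictatorCap L q1 q2 z w Y) :
    G.IsDictatorCap L q2 q1 z w Y := by
  cases h with
  | shared h => exact .shared h
  | leaf h1 h2 hq hzq => exact .leaf h2 h1 hq.symm hzq
  | free h1 h2 h => exact .free h2 h1 h

theorem IsDictatorCap.connectedOn_insert (h : G.IsDictatorCap L q1 q2 z w Y) :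
    G.ConnectedOn (insert z Y) := by
  cases h with
  | shared h => exact h.connectedOn_insert
  | leaf _ _ _ hzq => exact (G.connectedOn_singleton _).insert rfl hzq
  | free _ _ h => exact h.connectedOn.insert (mem_insert _ _) h.adj_left

/-- In either case `v`, possibly after `w`, can be recolored from two colors which are not used on
`z`, and the target edge does not change if `w` is recolored. -/
theorem IsDictatorCap.not_touches_or (h : G.IsDictatorCap L q1 q2 z w Y)
    (hL : G.ShortListsOuter L) (hvw : G.Adj v w) (hzv : G.Adj z v) (hzw : G.Adj z w)
    (hv : v ∈ G.boundaryVerts) (hw : w ∈ G.boundaryVerts) (hz : z ∈ G.boundaryVerts)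
    (hq1 : q1 ∈ G.boundaryVerts) (hq2 : q2 ∈ G.boundaryVerts) (hvY : v ∉ Y) (hwY : w ∉ Y)
    (hzY : z ∉ Y) :
    ¬G.Touches {v} Y ∨
      w ≠ q1 ∧ w ≠ q2 ∧ ¬G.Touches {w} Y ∧ {y ∈ Y | G.Adj v y}.Subsingleton := by
  have hbridge : G.IsOuterBridge v z {w} := isOuterBridge_singleton hw hvw hzw
  cases h with
  | shared h =>
    exact .inl (h.not_touches hL (isOuterBridge_singleton hv hzv hvw.symm) hzw hz hw
      (by simpa using hvY))
  | @leaf q h1 h2 hq hzq =>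
    refine or_iff_not_imp_left.2 fun hvq =>
      ⟨h1, h2, ?_, subsingleton_singleton.anti (sep_subset _ _)⟩
    rw [not_not, touches_singleton] at hvq
    refine hbridge.not_touches (isOuterBridge_singleton ?_ hvq hzq) hzv.symm hv hz (by grind)
    rcases hq with rfl | rfl <;> assumption
  | @free u₁ u₂ Y h1 h2 h =>
    simp only [mem_insert_iff, not_or] at hvY hwY hzY
    refine or_iff_not_imp_left.2 fun hvY' => ⟨h1, h2, ?_, h.subsingleton_neighbors hL hz hv
      hzv.symm hvY.1 hvY.2.1 hvY.2.2 hzY.2.2⟩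
    refine hbridge.not_touches ⟨⟨h.connectedOn, u₁, mem_insert _ _, hL _ h.adj.left_mem
      h.card_left⟩, by simp [hvY], by simp [hzY], not_not.1 hvY', z, rfl, u₁, mem_insert _ _,
      h.adj_left⟩ hzv.symm hv hz (by simp [hwY])

end PlaneGraph

section Shape

variable {V : Type u} {G : PlaneGraph V} {L : V → Finset ℕ} {p1 p2 q1 q2 u w z u₁ u₂ : V}
  {c : ℕ} {C : Set (ℕ × ℕ)} {W : Set ℕ} {L0 : Finset ℕ}

theorem IsOrientedHarmonica.mem_verts (h : IsOrientedHarmonica L G p1 p2 q1 q2 C) :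
    q1 ∈ G.verts ∧ q2 ∈ G.verts := by
  induction h with
  | swap_source _ ih => exact ih
  | swap_target _ ih => exact ih.symm
  | same _ hverts => simp [hverts]
  | cherry hverts => simp [hverts]
  | shared _ _ ih => exact ih.imp And.left And.left
  | free _ _ ih => exact ih.imp And.left And.left
  | democracy _ _ ih => exact ih.imp And.left And.left

/-- The shape of a harmonica beyond its source edge, depending on the kind of its government. -/
structure HasHarmonicaShape (G : PlaneGraph V) (L : V → Finset ℕ) (p1 p2 q1 q2 : V)
    (C : Set (ℕ × ℕ)) : Prop where
  of_democracy : IsDemocracy C → G.IsCap L p1 p2 (G.verts \ {p1, p2})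
  of_left_dictator : (∃ a, ∀ c ∈ C, c.1 = a) →
    G.IsDictatorCap L q1 q2 p1 p2 (G.verts \ {p1, p2})
  of_right_dictator : (∃ a, ∀ c ∈ C, c.2 = a) →
    G.IsDictatorCap L q1 q2 p2 p1 (G.verts \ {p1, p2})

namespace HasHarmonicaShape

theorem swap_source (h : HasHarmonicaShape G L p1 p2 q1 q2 C) :
    HasHarmonicaShape G L p2 p1 q1 q2 (Prod.swap ⁻¹' C) := by
  constructor <;> rw [pair_comm]
  · exact fun hC => (h.of_democracy hC.preimage_swap).symm
  · exact fun ⟨a, ha⟩ => h.of_right_dictator ⟨a, fun c hc => ha c.swap hc⟩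
  · exact fun ⟨a, ha⟩ => h.of_left_dictator ⟨a, fun c hc => ha c.swap hc⟩

theorem swap_target (h : HasHarmonicaShape G L p1 p2 q1 q2 C) :
    HasHarmonicaShape G L p1 p2 q2 q1 C :=
  ⟨h.of_democracy, fun hC => (h.of_left_dictator hC).swap_target,
    fun hC => (h.of_right_dictator hC).swap_target⟩

theorem of_verts_eq (h : G.verts = {p1, p2}) : HasHarmonicaShape G L p1 p2 q1 q2 C := by
  have hcap (u v : V) : G.IsCap L u v (G.verts \ {p1, p2}) := fun hY => by simp [h] at hY
  exact ⟨fun _ => hcap p1 p2, fun _ => .shared (hcap p1 p2), fun _ => .shared (hcap p2 p1)⟩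

theorem of_isDictatorCap (hW : W.Nontrivial)
    (h : G.IsDictatorCap L q1 q2 z w (G.verts \ {z, w})) :
    HasHarmonicaShape G L z w q1 q2 ({c} ×ˢ W) :=
  ⟨fun hC => (hC.not_fst_constant c fun _ hd => hd.1).elim, fun _ => h,
    fun ⟨a, ha⟩ => (not_snd_constant_singleton_prod hW c a ha).elim⟩

theorem of_isCap (hC : IsDemocracy C) (h : G.IsCap L p1 p2 (G.verts \ {p1, p2})) :
    HasHarmonicaShape G L p1 p2 q1 q2 C :=
  ⟨fun _ => h, fun ⟨a, ha⟩ => (hC.not_fst_constant a ha).elim,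
    fun ⟨a, ha⟩ => (hC.not_snd_constant a ha).elim⟩

end HasHarmonicaShape

theorem card_insert_lt_five (hL0 : L0.card = 2) (c : ℕ) : (insert c L0).card < 5 :=
  (Finset.card_insert_le c L0).trans_lt (by simp [hL0])

theorem SharedTriangle.card_apex_lt (h : SharedTriangle G L z w u c L0) : (L u).card < 5 :=
  h.list_apex ▸ card_insert_lt_five h.card_eq_two c

theorem DemocraticTriangle.card_apex_lt (h : DemocraticTriangle G L p1 p2 z q1 q2 c L0) :
    (L z).card < 5 :=
  h.list_apex ▸ card_insert_lt_five h.card_eq_two c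

theorem SharedTriangle.verts_diff (h : SharedTriangle G L z w u c L0) :
    G.verts \ {z, w} = insert u ((G.deleteVerts {z}).verts \ {w, u}) := by
  ext x
  simp only [PlaneGraph.deleteVerts, mem_sdiff, mem_insert_iff, mem_singleton_iff]
  grind [h.adj_left.ne, h.adj_right.ne, h.adj_left.right_mem]

theorem FreeTriangle.verts_diff (h : FreeTriangle G L z w u₁ u₂ c W L0) :
    G.verts \ {z, w} = insert u₁ (insert u₂ ((G.deleteVerts {z, w}).verts \ {u₁, u₂})) := by
  ext x
  simp only [PlaneGraph.deleteVerts, mem_sdiff, mem_insert_iff, mem_singleton_iff]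
  grind [h.adj_left.ne, h.adj_right.ne, h.adj.left_mem, h.adj.right_mem, h.left_ne, h.right_ne]

theorem DemocraticTriangle.verts_diff (h : DemocraticTriangle G L p1 p2 z q1 q2 c L0) :
    G.verts \ {p1, p2} = insert z ((G.deleteVerts {p1}).verts \ {z, p2}) := by
  ext x
  simp only [PlaneGraph.deleteVerts, mem_sdiff, mem_insert_iff, mem_singleton_iff]
  grind [h.adj_left.ne, h.adj_right.ne, h.adj_left.left_mem]

theorem SharedTriangle.hasHarmonicaShape (h : SharedTriangle G L z w u c L0)
    (hcap : (G.deleteVerts {z}).IsCap L w u ((G.deleteVerts {z}).verts \ {w, u})) :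
    HasHarmonicaShape G L z w q1 q2 ({c} ×ˢ L0) := by
  refine .of_isDictatorCap (nontrivial_of_card_eq_two h.card_eq_two) (.shared fun _ => ?_)
  rw [h.verts_diff]
  exact ⟨hcap.of_deleteVerts.symm.connectedOn_insert, by
    simp [h.adj_left.ne, PlaneGraph.deleteVerts], by simp [h.adj_right.ne], u, mem_insert _ _,
    h.adj_left.symm, h.adj_right.symm, h.card_apex_lt⟩

theorem FreeTriangle.cappedTriangle (h : FreeTriangle G L z w u₁ u₂ c W L0)
    (hcap : (G.deleteVerts {z, w}).IsCap L u₁ u₂ ((G.deleteVerts {z, w}).verts \ {u₁, u₂})) :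
    G.CappedTriangle L z u₁ u₂ ((G.deleteVerts {z, w}).verts \ {u₁, u₂}) := by
  have hcard := card_insert_lt_five h.card_eq_two c
  exact ⟨h.adj_left, h.adj_right, h.adj, h.list_left ▸ hcard, h.list_right ▸ hcard,
    hcap.of_deleteVerts⟩

theorem DemocraticTriangle.hasHarmonicaShape (h : DemocraticTriangle G L p1 p2 z q1 q2 c L0)
    (hcap : (G.deleteVerts {p1}).IsDictatorCap L q1 q2 z p2
      ((G.deleteVerts {p1}).verts \ {z, p2})) :
    HasHarmonicaShape G L p1 p2 q1 q2 (L0 : Set ℕ).offDiag := by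
  refine .of_isCap (isDemocracy_iff.2 ⟨L0, h.card_eq_two, rfl⟩) fun _ => ?_
  rw [h.verts_diff]
  exact ⟨hcap.of_deleteVerts.connectedOn_insert, by
    simp [h.adj_left.ne.symm, PlaneGraph.deleteVerts], by simp [h.adj_right.ne.symm],
    z, mem_insert _ _, h.adj_left, h.adj_right, h.card_apex_lt⟩

theorem IsOrientedHarmonica.hasHarmonicaShape (h : IsOrientedHarmonica L G p1 p2 q1 q2 C) :
    HasHarmonicaShape G L p1 p2 q1 q2 C := by
  induction h with
  | swap_source _ ih => exact ih.swap_source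
  | swap_target _ ih => exact ih.swap_target
  | same _ hverts => exact .of_verts_eq hverts
  | @cherry G z w q c W hverts hzw hwq hzq _ _ hW =>
    have hdiff : G.verts \ {z, w} = {q} := by
      ext x
      simp only [hverts, mem_sdiff, mem_insert_iff, mem_singleton_iff]
      grind [hzq.ne]
    exact .of_isDictatorCap hW (hdiff ▸ .leaf hzw.symm hwq (.inr rfl) hzq)
  | shared hT _ ih =>
    exact hT.hasHarmonicaShape (ih.of_democracy (isDemocracy_iff.2 ⟨_, hT.card_eq_two, rfl⟩))
  | free hT hrec ih =>
    have hT' := hT.cappedTriangle (ih.of_democracy (isDemocracy_iff.2 ⟨_, hT.card_eq_two, rfl⟩))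
    refine .of_isDictatorCap hT.nontrivial (hT.verts_diff ▸ .free ?_ ?_ hT')
    · rintro rfl
      exact hrec.mem_verts.1.2 (by simp)
    · rintro rfl
      exact hrec.mem_verts.2.2 (by simp)
  | democracy hT _ ih =>
    exact hT.hasHarmonicaShape (ih.of_left_dictator ⟨_, fun _ hd => hd.1⟩)

end Shape

/-! ### Colorings of induced subgraphs -/

section Coloring

variable {V : Type u} {G : PlaneGraph V} {L : V → Finset ℕ} {p1 p2 q1 q2 v : V}
  {c : ℕ} {C : Set (ℕ × ℕ)} {s X Y : Set V} {φ : V → ℕ}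

/-- `φ` restricts to an `L`-coloring of the subgraph of `G` induced by `X`. -/
def PlaneGraph.IsColoringOn (G : PlaneGraph V) (L : V → Finset ℕ) (X : Set V) (φ : V → ℕ) : Prop :=
  (∀ v ∈ X, φ v ∈ L v) ∧ ∀ u ∈ X, ∀ v ∈ X, G.Adj u v → φ u ≠ φ v

namespace PlaneGraph

theorem IsColoringOn.mono (h : G.IsColoringOn L Y φ) (hXY : X ⊆ Y) : G.IsColoringOn L X φ :=
  ⟨fun v hv => h.1 v (hXY hv), fun u hu v hv => h.2 u (hXY hu) v (hXY hv)⟩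

open Function in
open Classical in
theorem IsColoringOn.update (h : G.IsColoringOn L (X \ {v}) φ) (hc : c ∈ L v)
    (hv : ∀ x ∈ X, G.Adj v x → φ x ≠ c) : G.IsColoringOn L X (update φ v c) := by
  refine ⟨fun x hx => ?_, fun x hx y hy hxy => ?_⟩
  · obtain rfl | hxv := eq_or_ne x v
    · simpa
    · simpa [hxv] using h.1 x ⟨hx, hxv⟩
  · obtain rfl | hxv := eq_or_ne x v
    · simpa [hxy.ne.symm] using (hv y hy hxy).symm
    obtain rfl | hyv := eq_or_ne y v
    · simpa [hxv] using hv x hx hxy.symm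
    · simpa [hxv, hyv] using h.2 x ⟨hx, hxv⟩ y ⟨hy, hyv⟩ hxy

end PlaneGraph

theorem mem_phi {d : ℕ × ℕ} : d ∈ Phi G L p1 p2 q1 q2 C ↔
    ∃ φ, G.IsColoringOn L G.verts φ ∧ (φ p1, φ p2) ∈ C ∧ (φ q1, φ q2) = d := by
  constructor
  · rintro ⟨φ, hL, hadj, hC, h1, h2⟩
    exact ⟨φ, ⟨hL, fun u _ v _ => hadj u v⟩, hC, Prod.ext h1 h2⟩
  · rintro ⟨φ, ⟨hL, hadj⟩, hC, rfl⟩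
    exact ⟨φ, hL, fun u v huv => hadj u huv.left_mem v huv.right_mem huv, hC, rfl, rfl⟩

theorem mem_phi_deleteVerts {d : ℕ × ℕ} : d ∈ Phi (G.deleteVerts s) L p1 p2 q1 q2 C ↔
    ∃ φ, G.IsColoringOn L (G.verts \ s) φ ∧ (φ p1, φ p2) ∈ C ∧ (φ q1, φ q2) = d := by
  rw [mem_phi]
  refine exists_congr fun φ => and_congr_left fun _ => and_congr_right fun _ => ?_
  exact forall₄_congr fun u hu v hv => ⟨fun h huv => h ⟨huv, hu.2, hv.2⟩, fun h huv => h huv.1⟩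

theorem phi_swap_source :
    Phi G L p2 p1 q1 q2 (Prod.swap ⁻¹' C) = Phi G L p1 p2 q1 q2 C := rfl

theorem phi_swap_target : Phi G L p1 p2 q2 q1 C = Prod.swap ⁻¹' Phi G L p1 p2 q1 q2 C := by
  ext d
  simp only [Phi, mem_preimage, mem_ofPred_eq, Prod.fst_swap, Prod.snd_swap, and_comm]

theorem exists_mem_forall_ne {W : Set ℕ} {N : Set V} (hW : W.Nontrivial) (hN : N.Subsingleton)
    (φ : V → ℕ) : ∃ d ∈ W, ∀ x ∈ N, φ x ≠ d := by
  obtain rfl | ⟨x, rfl⟩ := hN.eq_empty_or_singleton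
  · exact hW.nonempty.imp fun d hd => ⟨hd, by simp⟩
  · obtain ⟨d, hd, hdx⟩ := hW.exists_ne (φ x)
    exact ⟨d, hd, by simpa using hdx.symm⟩

end Coloring

/-! ### Transport of the extendable colorings along a harmonica -/

section Transport

variable {V : Type u} {G : PlaneGraph V} {L : V → Finset ℕ} {p1 p2 q1 q2 u w x z u₁ u₂ : V}
  {c : ℕ} {C : Set (ℕ × ℕ)} {W : Set ℕ} {L0 : Finset ℕ}

theorem SharedTriangle.eq_or_eq_of_adj (h : SharedTriangle G L z w u c L0)
    (hcap : (G.deleteVerts {z}).IsCap L w u ((G.deleteVerts {z}).verts \ {w, u}))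
    (hzx : G.Adj z x) : x = w ∨ x = u := by
  by_contra! hx
  refine hcap.of_deleteVerts.not_touches h.canvas.shortListsOuter
    (PlaneGraph.isOuterBridge_singleton h.canvas.left_mem_boundaryVerts h.canvas.adj.symm
      h.adj_left.symm)
    h.adj_right h.canvas.symm.left_mem_boundaryVerts
    (h.canvas.shortListsOuter u h.adj_left.right_mem h.card_apex_lt)
    (by simp [PlaneGraph.deleteVerts]) ?_
  exact ⟨z, rfl, x, ⟨⟨hzx.right_mem, hzx.ne.symm⟩, by simp [hx]⟩, hzx⟩

open Function in
open Classical in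
theorem SharedTriangle.phi_eq (h : SharedTriangle G L z w u c L0)
    (hcap : (G.deleteVerts {z}).IsCap L w u ((G.deleteVerts {z}).verts \ {w, u}))
    (hq1 : q1 ≠ z) (hq2 : q2 ≠ z) :
    Phi G L z w q1 q2 ({c} ×ˢ L0) =
      Phi (G.deleteVerts {z}) L w u q1 q2 (L0 : Set ℕ).offDiag := by
  ext d
  rw [mem_phi, mem_phi_deleteVerts]
  constructor
  · rintro ⟨φ, hφ, ⟨hz, hw⟩, hd⟩
    have hu : φ u ∈ L0 := by
      have hLu := hφ.1 u h.adj_left.right_mem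
      rw [h.list_apex, Finset.mem_insert] at hLu
      exact hLu.resolve_left
        (hz ▸ (hφ.2 z h.adj_left.left_mem u h.adj_left.right_mem h.adj_left).symm)
    exact ⟨φ, hφ.mono sdiff_subset, ⟨hw, hu, hφ.2 w h.adj_right.left_mem u h.adj_right.right_mem
      h.adj_right⟩, hd⟩
  · rintro ⟨φ, hφ, ⟨hw, hu, -⟩, rfl⟩
    refine ⟨update φ z c, hφ.update h.mem_list fun x _ hzx => ?_, ?_, by simp [hq1, hq2]⟩
    · rcases h.eq_or_eq_of_adj hcap hzx with rfl | rfl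
      · exact ne_of_mem_of_not_mem hw h.notMem
      · exact ne_of_mem_of_not_mem hu h.notMem
    · simpa [h.canvas.1.symm] using hw

theorem FreeTriangle.eq_or_eq_of_adj (h : FreeTriangle G L z w u₁ u₂ c W L0)
    (hT : G.CappedTriangle L z u₁ u₂ ((G.deleteVerts {z, w}).verts \ {u₁, u₂}))
    (hzx : G.Adj z x) (hxw : x ≠ w) : x = u₁ ∨ x = u₂ := by
  by_contra! hx
  exact hT.not_touches h.canvas.shortListsOuter h.canvas.left_mem_boundaryVerts (.inl rfl)
    h.adj_left.ne h.adj_right.ne (by simp [PlaneGraph.deleteVerts])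
    (by simp [PlaneGraph.deleteVerts])
    ⟨z, rfl, x, ⟨⟨hzx.right_mem, by simp [hzx.ne.symm, hxw]⟩, by simp [hx]⟩, hzx⟩

theorem FreeTriangle.subsingleton_neighbors (h : FreeTriangle G L z w u₁ u₂ c W L0)
    (hT : G.CappedTriangle L z u₁ u₂ ((G.deleteVerts {z, w}).verts \ {u₁, u₂})) :
    {x | G.Adj w x ∧ x ≠ z}.Subsingleton := by
  refine (hT.subsingleton_neighbors h.canvas.shortListsOuter h.canvas.left_mem_boundaryVerts
    h.canvas.symm.left_mem_boundaryVerts h.canvas.adj.symm h.left_ne.symm h.right_ne.symm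
    (by simp [PlaneGraph.deleteVerts]) (by simp [PlaneGraph.deleteVerts])).anti ?_
  rintro x ⟨hwx, hxz⟩
  refine ⟨?_, hwx⟩
  rw [← h.verts_diff]
  exact ⟨hwx.right_mem, by simp [hxz, hwx.ne.symm]⟩

theorem FreeTriangle.phi_subset (h : FreeTriangle G L z w u₁ u₂ c W L0) :
    Phi G L z w q1 q2 ({c} ×ˢ W) ⊆
      Phi (G.deleteVerts {z, w}) L u₁ u₂ q1 q2 (L0 : Set ℕ).offDiag := by
  intro d
  rw [mem_phi, mem_phi_deleteVerts]
  rintro ⟨φ, hφ, ⟨hz, -⟩, hd⟩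
  have hu (u : V) (hzu : G.Adj z u) (hLu : L u = insert c L0) : φ u ∈ L0 := by
    have := hφ.1 u hzu.right_mem
    rw [hLu, Finset.mem_insert] at this
    exact this.resolve_left (hz ▸ (hφ.2 z hzu.left_mem u hzu.right_mem hzu).symm)
  exact ⟨φ, hφ.mono sdiff_subset, ⟨hu u₁ h.adj_left h.list_left, hu u₂ h.adj_right h.list_right,
    hφ.2 u₁ h.adj.left_mem u₂ h.adj.right_mem h.adj⟩, hd⟩

open Function in
open Classical in
theorem FreeTriangle.subset_phi (h : FreeTriangle G L z w u₁ u₂ c W L0)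
    (hT : G.CappedTriangle L z u₁ u₂ ((G.deleteVerts {z, w}).verts \ {u₁, u₂}))
    (hq1 : q1 ∉ ({z, w} : Set V)) (hq2 : q2 ∉ ({z, w} : Set V)) :
    Phi (G.deleteVerts {z, w}) L u₁ u₂ q1 q2 (L0 : Set ℕ).offDiag ⊆
      Phi G L z w q1 q2 ({c} ×ˢ W) := by
  intro d
  rw [mem_phi_deleteVerts, mem_phi]
  rintro ⟨φ, hφ, ⟨h₁, h₂, -⟩, rfl⟩
  simp only [mem_insert_iff, mem_singleton_iff, not_or] at hq1 hq2
  obtain ⟨a, haW, ha⟩ := exists_mem_forall_ne h.nontrivial (h.subsingleton_neighbors hT) φ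
  have hw : G.IsColoringOn L (G.verts \ {z}) (update φ w a) := by
    refine .update (hφ.mono ?_) (h.subset_list haW) fun x hx hwx => ha x ⟨hwx, hx.2⟩
    rw [sdiff_sdiff, singleton_union]
  refine ⟨update (update φ w a) z c, hw.update h.mem_list fun x _ hzx => ?_, ?_, ?_⟩
  · obtain rfl | hxw := eq_or_ne x w
    · simpa using ne_of_mem_of_not_mem haW h.notMem_colors
    rw [update_of_ne hxw]
    rcases h.eq_or_eq_of_adj hT hzx hxw with rfl | rfl
    · exact ne_of_mem_of_not_mem h₁ h.notMem
    · exact ne_of_mem_of_not_mem h₂ h.notMem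
  · simpa [h.canvas.1.symm] using haW
  · simp [hq1, hq2]

theorem DemocraticTriangle.eq_or_eq_of_adj_or (h : DemocraticTriangle G L p1 p2 z q1 q2 c L0)
    (hcap : (G.deleteVerts {p1}).IsDictatorCap L q1 q2 z p2
      ((G.deleteVerts {p1}).verts \ {z, p2})) :
    (∀ x, G.Adj p1 x → x = p2 ∨ x = z) ∨ p2 ≠ q1 ∧ p2 ≠ q2 ∧ (∀ x, G.Adj p2 x → x = p1 ∨ x = z) ∧
      {x | G.Adj p1 x ∧ x ≠ p2 ∧ x ≠ z}.Subsingleton := by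
  have hverts : (G.deleteVerts {p1}).verts \ {z, p2} = G.verts \ {p1, p2, z} := by
    ext x
    simp only [PlaneGraph.deleteVerts, mem_sdiff, mem_insert_iff, mem_singleton_iff]
    tauto
  rw [hverts] at hcap
  have hz : z ∈ G.boundaryVerts := h.canvas.shortListsOuter z h.adj_left.left_mem h.card_apex_lt
  refine (hcap.of_deleteVerts.not_touches_or h.canvas.shortListsOuter h.canvas.adj h.adj_left
    h.adj_right h.canvas.left_mem_boundaryVerts h.canvas.symm.left_mem_boundaryVerts hz
    h.left_target_mem h.right_target_mem (by simp) (by simp) (by simp)).imp ?_ ?_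
  · intro hp1 x hx
    by_contra! hne
    exact hp1 ⟨p1, rfl, x, ⟨hx.right_mem, by simp [hne, hx.ne.symm]⟩, hx⟩
  · rintro ⟨hq1, hq2, hp2, hsub⟩
    refine ⟨hq1, hq2, fun x hx => ?_, hsub.anti ?_⟩
    · by_contra! hne
      exact hp2 ⟨p2, rfl, x, ⟨hx.right_mem, by simp [hne, hx.ne.symm]⟩, hx⟩
    · rintro x ⟨hx, hne⟩
      exact ⟨⟨hx.right_mem, by simp [hne, hx.ne.symm]⟩, hx⟩

theorem DemocraticTriangle.phi_subset (h : DemocraticTriangle G L p1 p2 z q1 q2 c L0) :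
    Phi G L p1 p2 q1 q2 (L0 : Set ℕ).offDiag ⊆
      Phi (G.deleteVerts {p1}) L z p2 q1 q2 ({c} ×ˢ L0) := by
  intro d
  rw [mem_phi, mem_phi_deleteVerts]
  rintro ⟨φ, hφ, ⟨h1, h2, h12⟩, hd⟩
  have hz1 := hφ.2 z h.adj_left.left_mem p1 h.adj_left.right_mem h.adj_left
  have hz2 := hφ.2 z h.adj_right.left_mem p2 h.adj_right.right_mem h.adj_right
  have hz : φ z = c := by
    have hLz := hφ.1 z h.adj_left.left_mem
    obtain ⟨a, b, -, rfl⟩ := Finset.card_eq_two.1 h.card_eq_two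
    simp only [h.list_apex, Finset.mem_insert, Finset.mem_singleton] at hLz
    simp only [Finset.coe_insert, Finset.coe_singleton, mem_insert_iff, mem_singleton_iff] at h1 h2
    grind
  exact ⟨φ, hφ.mono sdiff_subset, ⟨hz, h2⟩, hd⟩

open Function in
open Classical in
theorem DemocraticTriangle.subset_phi (h : DemocraticTriangle G L p1 p2 z q1 q2 c L0)
    (hcap : (G.deleteVerts {p1}).IsDictatorCap L q1 q2 z p2
      ((G.deleteVerts {p1}).verts \ {z, p2})) (hq1 : q1 ≠ p1) (hq2 : q2 ≠ p1) :
    Phi (G.deleteVerts {p1}) L z p2 q1 q2 ({c} ×ˢ L0) ⊆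
      Phi G L p1 p2 q1 q2 (L0 : Set ℕ).offDiag := by
  intro d
  rw [mem_phi_deleteVerts, mem_phi]
  rintro ⟨φ, hφ, ⟨rfl, h2⟩, rfl⟩
  have hL0 := nontrivial_of_card_eq_two h.card_eq_two
  have hne {a : ℕ} (ha : a ∈ L0) : φ z ≠ a := (ne_of_mem_of_not_mem ha h.notMem).symm
  rcases h.eq_or_eq_of_adj_or hcap with hp1 | ⟨hpq1, hpq2, hp2, hsub⟩
  · obtain ⟨a, ha, hap2⟩ := hL0.exists_ne (φ p2)
    refine ⟨update φ p1 a, hφ.update (h.subset_list_left ha) fun x _ hx => ?_, ?_, ?_⟩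
    · rcases hp1 x hx with rfl | rfl
      exacts [hap2.symm, hne ha]
    · simpa [mem_offDiag, h.canvas.1.symm, hap2] using ⟨ha, h2⟩
    · simp [hq1, hq2]
  · obtain ⟨a, ha, hasub⟩ := exists_mem_forall_ne hL0 hsub φ
    obtain ⟨b, hb, hba⟩ := hL0.exists_ne a
    have hp2φ : G.IsColoringOn L (G.verts \ {p1}) (update φ p2 b) := by
      refine (hφ.mono sdiff_subset).update (h.subset_list_right hb) fun x hx hx2 => ?_
      rcases hp2 x hx2 with rfl | rfl
      exacts [(hx.2 rfl).elim, hne hb]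
    refine ⟨update (update φ p2 b) p1 a, hp2φ.update (h.subset_list_left ha) fun x _ hx => ?_, ?_,
      ?_⟩
    · obtain rfl | hxp2 := eq_or_ne x p2
      · simpa using hba
      obtain rfl | hxz := eq_or_ne x z
      · simpa [hxp2] using hne ha
      · simpa [hxp2] using hasub x ⟨hx, hxp2, hxz⟩
    · simpa [mem_offDiag, h.canvas.1.symm, hba.symm] using ⟨ha, hb⟩
    · simp [hq1, hq2, hpq1.symm, hpq2.symm]

open Function in
open Classical in
theorem phi_eq_of_verts_eq_pair (h12 : p1 ≠ p2) (hverts : G.verts = {p1, p2})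
    (hproper : ∀ d ∈ C, ProperEdgeColoring L p1 p2 d) : Phi G L p1 p2 p1 p2 C = C := by
  ext d
  rw [mem_phi, hverts]
  constructor
  · rintro ⟨φ, -, hC, rfl⟩
    exact hC
  · intro hd
    obtain ⟨h1, h2, hne⟩ := hproper d hd
    refine ⟨update (update (fun _ => 0) p2 d.2) p1 d.1, ⟨?_, ?_⟩, by simpa [h12.symm], by
      simp [h12.symm]⟩
    · simp [h12.symm, h1, h2]
    · simp [h12.symm, hne, hne.symm, G.adj_irrefl]

open Function in
open Classical in
theorem phi_cherry {q : V} (hverts : G.verts = {z, w, q}) (hzw : z ≠ w) (hwq : w ≠ q)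
    (hzq : G.Adj z q) (hnadj : ¬G.Adj w q) (hW : W.Nonempty)
    (hproper : ∀ d ∈ {c} ×ˢ W, ProperEdgeColoring L z w d) :
    Phi G L z w z q ({c} ×ˢ W) = {c} ×ˢ ((L q : Set ℕ) \ {c}) := by
  ext ⟨a, b⟩
  rw [mem_phi, hverts]
  constructor
  · rintro ⟨φ, hφ, ⟨hz, -⟩, hab⟩
    obtain ⟨rfl, rfl⟩ := Prod.mk.inj hab
    exact ⟨hz, hφ.1 q (by simp), hz ▸ (hφ.2 z (by simp) q (by simp) hzq).symm⟩
  · rintro ⟨rfl, hb, hba⟩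
    obtain ⟨d, hd⟩ := hW
    obtain ⟨hz, hw, hne⟩ := hproper (a, d) ⟨rfl, hd⟩
    simp only [mem_singleton_iff] at hba
    have hnadj' : ¬G.Adj q w := fun h => hnadj h.symm
    refine ⟨update (update (fun _ => b) w d) z a, ⟨?_, ?_⟩, ?_, ?_⟩
    · simp_all [hzq.ne.symm, hzw.symm, hwq.symm]
    · simp_all [hzq.ne.symm, hzw.symm, hwq.symm, G.adj_irrefl, Ne.symm hba, hne.symm]
    · simp [hzw.symm, hd]
    · simp [hzq.ne.symm, hwq.symm]

theorem IsOrientedHarmonica.isGovernment_phi (h : IsOrientedHarmonica L G p1 p2 q1 q2 C) :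
    IsGovernment (Phi G L p1 p2 q1 q2 C) := by
  induction h with
  | swap_source _ ih => rwa [phi_swap_source]
  | swap_target _ ih => exact phi_swap_target ▸ ih.preimage_swap
  | same hne hverts hproper hC => rwa [phi_eq_of_verts_eq_pair hne hverts hproper]
  | @cherry G z w q c W hverts hzw hwq hzq hnadj hq hW hproper =>
    rw [phi_cherry hverts hzw hwq hzq hnadj hW.nonempty hproper]
    have hcard : 1 < ((L q).erase c).card := by
      have := Finset.pred_card_le_card_erase (s := L q) (a := c)
      lia
    rw [← Finset.coe_erase]
    exact .inl (isDictatorship_singleton_prod.2 (Finset.one_lt_card_iff_nontrivial.1 hcard))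
  | shared hT hrec ih =>
    have hcap := hrec.hasHarmonicaShape.of_democracy (isDemocracy_iff.2 ⟨_, hT.card_eq_two, rfl⟩)
    rwa [hT.phi_eq hcap hrec.mem_verts.1.2 hrec.mem_verts.2.2]
  | free hT hrec ih =>
    have hcap := hrec.hasHarmonicaShape.of_democracy (isDemocracy_iff.2 ⟨_, hT.card_eq_two, rfl⟩)
    rwa [hT.phi_subset.antisymm
      (hT.subset_phi (hT.cappedTriangle hcap) hrec.mem_verts.1.2 hrec.mem_verts.2.2)]
  | democracy hT hrec ih =>
    have hcap := hrec.hasHarmonicaShape.of_left_dictator ⟨_, fun _ hd => hd.1⟩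
    rwa [hT.phi_subset.antisymm (hT.subset_phi hcap hrec.mem_verts.1.2 hrec.mem_verts.2.2)]

end Transport

/-- let `T = (G, P, L)` be a harmonica from `P = p₁p₂` to
`P' = q₁q₂` with government `𝒞`. Then `Φ_T(P', 𝒞)` is a government. -/
theorem harmonica_phi_government {V : Type u} (G : PlaneGraph V)
    (p1 p2 q1 q2 : V) (L : V → Finset ℕ) (C : Set (ℕ × ℕ))
    (h : IsHarmonica L G p1 p2 q1 q2 C) :
    IsGovernment (Phi G L p1 p2 q1 q2 C) := by
  exact h.isOrientedHarmonica.isGovernment_phi
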